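/- arXiv:1811.11411 — 5 statements merged into one kernel-verified Lean document; each statement's English description precedes it below -/
import Mathlib

section
/- If G is a graph on n vertices with k connected components, then F(G) ≤ (k-1) + Σ_{i=1}^{n-k+1} C(n-k+1, i)·h_i, with equality if and only if G is the disjoint union of k-1 isolated vertices and a complete graph K_{n-k+1}. -/
open SimpleGraph

/-- The core index of a graph `G`: the number of connected subgraphs of `G`. -/
noncomputable def coreIndex {V : Type*} (G : SimpleGraph V) : ℕ :=
  Nat.card {H : G.Subgraph // H.Connected}

/-- `numConnectedGraphs i`: the number of connected labeled graphs on `i` vertices. -/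
noncomputable def numConnectedGraphs (i : ℕ) : ℕ :=
  Nat.card {G : SimpleGraph (Fin i) // G.Connected}

lemma ci_map_connected {V W : Type*} {G : SimpleGraph V} {G' : SimpleGraph W} (f : G →g G')
    {H : G.Subgraph} (h : H.Connected) : (H.map f).Connected := by
  refine ⟨h.coe.map (H := (H.map f).coe)
    ⟨fun x : H.verts => ⟨f x.1, Set.mem_image_of_mem _ x.2⟩, ?_⟩ ?_⟩
  · intro a b hab
    exact ⟨a, b, hab, rfl, rfl⟩
  · rintro ⟨_, x, hx, rfl⟩
    exact ⟨⟨x, hx⟩, rfl⟩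

/-- The complete graph's connected subgraphs, by vertex set. -/
noncomputable def ciEquiv (W : Type*) [Fintype W] :
    {H : (⊤ : SimpleGraph W).Subgraph // H.Connected} ≃
      (Σ s : Finset W, {G : SimpleGraph {x // x ∈ s} // G.Connected}) := by
  classical
  have e0 : {H : (⊤ : SimpleGraph W).Subgraph // H.Connected} ≃
      (Σ s : Set W, {G : SimpleGraph s // G.Connected}) :=
    { toFun := fun H => ⟨H.1.verts, H.1.coe, H.2.coe⟩
      invFun := fun x => ⟨
        { verts := x.1
          Adj := fun a b => ∃ (ha : a ∈ x.1) (hb : b ∈ x.1), x.2.1.Adj ⟨a, ha⟩ ⟨b, hb⟩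
          adj_sub := by
            rintro a b ⟨ha, hb, h⟩
            simpa using h.ne
          edge_vert := by
            rintro a b ⟨ha, hb, h⟩
            exact ha
          symm := ⟨by
            rintro a b ⟨ha, hb, h⟩
            exact ⟨hb, ha, h.symm⟩⟩ },
        ⟨by
          convert x.2.2
          ext a b
          simp [Subgraph.coe]⟩⟩
      left_inv := by
        rintro ⟨H, hH⟩
        apply Subtype.ext
        ext a b
        · rfl
        · constructor
          · rintro ⟨_, _, h⟩
            exact h
          · intro h
            exact ⟨h.fst_mem, h.snd_mem, h⟩
      right_inv := by
        rintro ⟨s, G, hG⟩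
        refine Sigma.ext rfl (heq_of_eq ?_)
        apply Subtype.ext
        ext a b
        simp [Subgraph.coe] }
  refine e0.trans (Equiv.sigmaCongr Fintype.finsetEquivSet.symm fun s => ?_)
  have e1 : s ≃ {x // x ∈ Fintype.finsetEquivSet.symm s} :=
    Equiv.subtypeEquivRight (fun x => by simp [Fintype.finsetEquivSet])
  exact e1.simpleGraph.subtypeEquiv (fun G => (Iso.comap e1.symm G).connected_iff.symm)

lemma ci_numConn {T : Type*} [Fintype T] :
    Nat.card {G : SimpleGraph T // G.Connected} = numConnectedGraphs (Fintype.card T) := by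
  have e1 := Fintype.equivFin T
  exact Nat.card_congr (e1.simpleGraph.subtypeEquiv (fun G => (Iso.comap e1.symm G).connected_iff.symm))

lemma ci_numConn_zero : numConnectedGraphs 0 = 0 := by
  have : IsEmpty {G : SimpleGraph (Fin 0) // G.Connected} :=
    ⟨fun G => G.2.nonempty.elim Fin.elim0⟩
  exact Nat.card_of_isEmpty

lemma ci_complete (W : Type*) [Fintype W] (m : ℕ) (hm : Fintype.card W = m) :
    Nat.card {H : (⊤ : SimpleGraph W).Subgraph // H.Connected} =
      ∑ i ∈ Finset.Icc 1 m, m.choose i * numConnectedGraphs i := by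
  classical
  rw [Nat.card_congr (ciEquiv W), Nat.card_sigma]
  simp_rw [ci_numConn, Fintype.card_coe]
  rw [← Finset.powerset_univ, Finset.sum_powerset_apply_card, Finset.card_univ, hm,
    Finset.sum_range_succ', ci_numConn_zero]
  simp only [smul_eq_mul, mul_zero, add_zero]
  rw [Finset.range_eq_Ico, Finset.sum_Ico_add' (fun i => m.choose i * numConnectedGraphs i)]
  rfl

section Main
variable {V : Type*} (G : SimpleGraph V)

/-- representative of a component -/
noncomputable def ciRep (c : G.ConnectedComponent) : V := Quot.out c

lemma ciRep_mk (c : G.ConnectedComponent) : G.connectedComponentMk (ciRep G c) = c :=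
  Quot.out_eq c

lemma ciRep_inj : Function.Injective (ciRep G) := fun a b h => by
  rw [← ciRep_mk G a, h, ciRep_mk]

/-- non-representatives -/
abbrev CiN := {v : V // v ∉ Set.range (ciRep G)}

open Classical in
/-- the quotient map -/
noncomputable def ciPi (v : V) : Option (CiN G) :=
  if h : v ∉ Set.range (ciRep G) then some ⟨v, h⟩ else none

lemma ciPi_some {v : V} {a : CiN G} : ciPi G v = some a ↔ v = a := by
  unfold ciPi
  split_ifs with h
  · simp only [reduceCtorEq, false_iff]
    rintro rfl
    exact a.2 h
  · simp [Subtype.ext_iff]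

lemma ciPi_none {v : V} : ciPi G v = none ↔ v ∈ Set.range (ciRep G) := by
  unfold ciPi
  split_ifs with h
  · simpa using h
  · simpa using h

lemma ciPi_inj {v w : V} (h : ciPi G v = ciPi G w)
    (hc : G.connectedComponentMk v = G.connectedComponentMk w) : v = w := by
  cases hw : ciPi G w with
  | none =>
    rw [hw] at h
    obtain ⟨c, rfl⟩ := (ciPi_none G).1 h
    obtain ⟨d, rfl⟩ := (ciPi_none G).1 hw
    rw [ciRep_mk, ciRep_mk] at hc
    rw [hc]
  | some a =>
    rw [hw] at h
    rw [(ciPi_some G).1 h, (ciPi_some G).1 hw]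

/-- the quotient homomorphism -/
noncomputable def ciHom : G →g (⊤ : SimpleGraph (Option (CiN G))) where
  toFun := ciPi G
  map_rel' := by
    intro a b h
    simp only [top_adj]
    intro h'
    exact h.ne (ciPi_inj G h' (ConnectedComponent.sound h.reachable))

variable {G}

lemma ci_sameComp {H : G.Subgraph} (h : H.Connected) {a b : V} (ha : a ∈ H.verts)
    (hb : b ∈ H.verts) : G.connectedComponentMk a = G.connectedComponentMk b :=
  ConnectedComponent.sound ((h.coe.preconnected ⟨a, ha⟩ ⟨b, hb⟩).map H.hom)

lemma ci_map_le {H H' : G.Subgraph} (h : H.Connected) (h' : H'.Connected) (a : CiN G)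
    (ha : a.1 ∈ H.verts) (he : H.map (ciHom G) = H'.map (ciHom G)) : H ≤ H' := by
  have ha' : a.1 ∈ H'.verts := by
    have : some a ∈ (H'.map (ciHom G)).verts := by
      rw [← he]
      exact ⟨a, ha, (ciPi_some G).2 rfl⟩
    obtain ⟨w, hw, hw'⟩ := this
    rwa [← (ciPi_some G).1 hw']
  constructor
  · intro x hx
    have : ciPi G x ∈ (H'.map (ciHom G)).verts := by
      rw [← he]
      exact ⟨x, hx, rfl⟩
    obtain ⟨y, hy, hy'⟩ := this
    have := ciPi_inj G hy' ((ci_sameComp h' hy ha').trans (ci_sameComp h ha hx))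
    rwa [← this]
  · intro x y hxy
    have : (H'.map (ciHom G)).Adj (ciPi G x) (ciPi G y) := by
      rw [← he]
      exact ⟨x, y, hxy, rfl, rfl⟩
    obtain ⟨u, v, huv, hu, hv⟩ := this
    have e1 := ciPi_inj G hu ((ci_sameComp h' huv.fst_mem ha').trans (ci_sameComp h ha hxy.fst_mem))
    have e2 := ciPi_inj G hv ((ci_sameComp h' huv.snd_mem ha').trans (ci_sameComp h ha hxy.snd_mem))
    rwa [← e1, ← e2]

lemma ci_map_mem {H : G.Subgraph} {a : CiN G} (h : some a ∈ (H.map (ciHom G)).verts) :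
    a.1 ∈ H.verts := by
  obtain ⟨w, hw, hw'⟩ := h
  rwa [← (ciPi_some G).1 hw']

open Classical in
/-- the counting injection -/
noncomputable def ciPhi : Option {H : G.Subgraph // H.Connected} →
    G.ConnectedComponent ⊕ {H : (⊤ : SimpleGraph (Option (CiN G))).Subgraph // H.Connected}
  | none => Sum.inr ⟨SimpleGraph.singletonSubgraph _ none, Subgraph.singletonSubgraph_connected⟩
  | some H => if ∃ a : CiN G, a.1 ∈ H.1.verts then
      Sum.inr ⟨H.1.map (ciHom G), ci_map_connected _ H.2⟩
      else Sum.inl (G.connectedComponentMk H.2.nonempty.some)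

lemma ci_noRep {H : G.Subgraph} (hH : H.Connected) (h : ¬ ∃ a : CiN G, a.1 ∈ H.verts) :
    H = G.singletonSubgraph (ciRep G (G.connectedComponentMk hH.nonempty.some)) := by
  rw [eq_singletonSubgraph_iff_verts_eq]
  have key : ∀ x ∈ H.verts, x = ciRep G (G.connectedComponentMk hH.nonempty.some) := by
    intro x hx
    have : x ∈ Set.range (ciRep G) := by
      by_contra hc
      exact h ⟨⟨x, hc⟩, hx⟩
    obtain ⟨c, rfl⟩ := this
    rw [ci_sameComp hH hH.nonempty.some_mem hx, ciRep_mk]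
  ext x
  constructor
  · intro hx
    exact key x hx
  · intro hx
    rw [Set.mem_singleton_iff.1 hx, ← key _ hH.nonempty.some_mem]
    exact hH.nonempty.some_mem

lemma ciPhi_inj : Function.Injective (ciPhi (G := G)) := by
  have aux : ∀ H : {H : G.Subgraph // H.Connected}, ciPhi none ≠ ciPhi (some H) := by
    intro H h
    simp only [ciPhi] at h
    split_ifs at h with h1
    obtain ⟨a, ha⟩ := h1
    have h2 := congrArg (fun K => K.1.verts) (Sum.inr.inj h)
    simp only at h2
    have : some a ∈ (H.1.map (ciHom G)).verts := ⟨a, ha, (ciPi_some G).2 rfl⟩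
    rw [← h2] at this
    simp at this
  rintro (_ | H) (_ | H') h
  · rfl
  · exact absurd h (aux _)
  · exact absurd h.symm (aux _)
  · congr 1
    apply Subtype.ext
    simp only [ciPhi] at h
    split_ifs at h with h1 h2 h2
    · obtain ⟨a, ha⟩ := h1
      obtain ⟨b, hb⟩ := h2
      have he := congrArg Subtype.val (Sum.inr.inj h)
      exact le_antisymm (ci_map_le H.2 H'.2 a ha he) (ci_map_le H'.2 H.2 b hb he.symm)
    · rw [ci_noRep H.2 h1, ci_noRep H'.2 h2, Sum.inl.inj h]

lemma ci_cardN [Fintype V] (n k : ℕ) (hn : Fintype.card V = n)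
    (hcomp : Nat.card G.ConnectedComponent = k) : Nat.card (CiN G) = n - k := by
  classical
  have h1 := Nat.card_eq_fintype_card (α := V)
  have h2 : Nat.card (Set.range (ciRep G)) = k := by
    rw [← hcomp]
    exact (Nat.card_congr (Equiv.ofInjective _ (ciRep_inj G))).symm
  have h3 := Nat.card_congr (Equiv.sumCompl (fun v => v ∈ Set.range (ciRep G)))
  rw [Nat.card_sum] at h3
  have h4 : Nat.card {v // v ∈ Set.range (ciRep G)} = k := h2
  show Nat.card {v : V // ¬ v ∈ Set.range (ciRep G)} = n - k
  omega

/-- surjectivity of the counting map forces adjacency -/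
lemma ci_surj_adj (hs : Function.Surjective (ciPhi (G := G))) {x y : Option (CiN G)}
    (hxy : x ≠ y) : ∃ a b, G.Adj a b ∧ ciPi G a = x ∧ ciPi G b = y := by
  have hadj : (⊤ : SimpleGraph (Option (CiN G))).Adj x y := hxy
  obtain ⟨o, ho⟩ := hs (Sum.inr ⟨_, Subgraph.subgraphOfAdj_connected hadj⟩)
  rcases o with _ | H
  · simp only [ciPhi] at ho
    have h2 := congrArg (fun K => K.1.verts) (Sum.inr.inj ho)
    simp only [singletonSubgraph_verts, subgraphOfAdj_verts] at h2
    have hx : x ∈ ({none} : Set (Option (CiN G))) := by rw [h2]; simp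
    have hy : y ∈ ({none} : Set (Option (CiN G))) := by rw [h2]; simp
    exact absurd (hx.trans hy.symm) hxy
  · simp only [ciPhi] at ho
    split_ifs at ho with h1
    have h2 := congrArg Subtype.val (Sum.inr.inj ho)
    simp only at h2
    have : (H.1.map (ciHom G)).Adj x y := by rw [h2]; simp
    obtain ⟨u, v, huv, hu, hv⟩ := this
    exact ⟨u, v, huv.adj_sub, hu, hv⟩

lemma ci_iso_of_surj [Fintype V] (n k : ℕ) (hn : Fintype.card V = n) (hk : 1 ≤ k)
    (hcomp : Nat.card G.ConnectedComponent = k)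
    (hs : Function.Surjective (ciPhi (G := G))) :
    Nonempty (G ≃g ((⊥ : SimpleGraph (Fin (k - 1))) ⊕g (⊤ : SimpleGraph (Fin (n - k + 1))))) := by
  classical
  have hNN : ∀ a b : CiN G, a ≠ b → G.Adj a b := by
    intro a b hab
    obtain ⟨u, v, h, hu, hv⟩ := ci_surj_adj hs (x := some a) (y := some b) (by simpa using hab)
    rwa [(ciPi_some G).1 hu, (ciPi_some G).1 hv] at h
  have hNR : ∀ a : CiN G, G.Adj (ciRep G (G.connectedComponentMk a.1)) a := by
    intro a
    obtain ⟨u, v, h, hu, hv⟩ := ci_surj_adj hs (x := none) (y := some a) (by simp)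
    obtain ⟨c, rfl⟩ := (ciPi_none G).1 hu
    rw [(ciPi_some G).1 hv] at h
    have : G.connectedComponentMk a.1 = c := by
      rw [← ConnectedComponent.sound h.reachable, ciRep_mk]
    rwa [this]
  have hc0 : ∃ c0, ∀ a : CiN G, G.connectedComponentMk a.1 = c0 := by
    by_cases hne : Nonempty (CiN G)
    · obtain ⟨b⟩ := hne
      refine ⟨G.connectedComponentMk b.1, fun a => ?_⟩
      by_cases hab : a = b
      · rw [hab]
      · exact ConnectedComponent.sound (hNN a b hab).reachable
    · have : Nonempty G.ConnectedComponent := by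
        by_contra hc
        rw [not_nonempty_iff] at hc
        rw [Nat.card_of_isEmpty] at hcomp
        omega
      obtain ⟨c⟩ := this
      exact ⟨c, fun a => absurd ⟨a⟩ hne⟩
  obtain ⟨c0, hc0⟩ := hc0
  have e1 : Fin (k - 1) ≃ {c : G.ConnectedComponent // c ≠ c0} := by
    refine (Finite.equivFinOfCardEq ?_).symm
    rw [Nat.card_eq_fintype_card, Fintype.card_subtype_compl, Fintype.card_subtype_eq,
      ← Nat.card_eq_fintype_card, hcomp]
  have e2 : Fin (n - k + 1) ≃ Option (CiN G) := by
    refine (Finite.equivFinOfCardEq ?_).symm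
    rw [Finite.card_option, ci_cardN n k hn hcomp]
  let g : Option (CiN G) → V := fun o => o.elim (ciRep G c0) Subtype.val
  have hgc : ∀ o, G.connectedComponentMk (g o) = c0 := by
    rintro (_ | a)
    · exact ciRep_mk G c0
    · exact hc0 a
  have hgpi : ∀ o, ciPi G (g o) = o := by
    rintro (_ | a)
    · exact (ciPi_none G).2 ⟨c0, rfl⟩
    · exact (ciPi_some G).2 rfl
  have hginj : Function.Injective g := fun a b h => by rw [← hgpi a, h, hgpi]
  have hgadj : ∀ o o', G.Adj (g o) (g o') ↔ o ≠ o' := by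
    intro o o'
    refine ⟨fun h he => h.ne (by rw [he]), ?_⟩
    rcases o with _ | a <;> rcases o' with _ | b
    · simp
    · intro _
      have := hNR b
      rwa [hc0 b] at this
    · intro _
      have := (hNR a).symm
      rwa [hc0 a] at this
    · intro h
      exact hNN a b (by simpa using h)
  let f : Fin (k - 1) ⊕ Fin (n - k + 1) → V := Sum.elim (fun i => ciRep G (e1 i).1) (fun j => g (e2 j))
  have hfl : ∀ i, G.connectedComponentMk (f (Sum.inl i)) = (e1 i).1 := fun i => ciRep_mk G _
  have hfr : ∀ j, G.connectedComponentMk (f (Sum.inr j)) = c0 := fun j => hgc _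
  have hlr : ∀ i j, G.connectedComponentMk (f (Sum.inl i)) ≠
      G.connectedComponentMk (f (Sum.inr j)) := by
    intro i j
    rw [hfl, hfr]
    exact (e1 i).2
  have hll : ∀ i i', G.connectedComponentMk (f (Sum.inl i)) =
      G.connectedComponentMk (f (Sum.inl i')) → i = i' := by
    intro i i' h
    rw [hfl, hfl] at h
    exact e1.injective (Subtype.ext h)
  have hfinj : Function.Injective f := by
    rintro (i | j) (i' | j') h
    · rw [hll i i' (by rw [h])]
    · exact absurd (by rw [h]) (hlr i j')
    · exact absurd (by rw [h]) (hlr i' j)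
    · rw [e2.injective (hginj h)]
  have hfsurj : Function.Surjective f := by
    intro v
    by_cases hv : v ∈ Set.range (ciRep G)
    · obtain ⟨c, rfl⟩ := hv
      by_cases hc : c = c0
      · refine ⟨Sum.inr (e2.symm none), ?_⟩
        simp [f, g, hc]
      · refine ⟨Sum.inl (e1.symm ⟨c, hc⟩), ?_⟩
        simp [f]
    · refine ⟨Sum.inr (e2.symm (some ⟨v, hv⟩)), ?_⟩
      simp [f, g]
  refine ⟨RelIso.symm ⟨Equiv.ofBijective f ⟨hfinj, hfsurj⟩, ?_⟩⟩
  rintro (i | j) (i' | j')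
  · simp only [sum_adj_inl, bot_adj, iff_false]
    intro h
    exact h.ne (by rw [hll i i' (ConnectedComponent.sound h.reachable)])
  · refine iff_of_false (fun h => hlr i j' (ConnectedComponent.sound h.reachable)) ?_
    simp
  · refine iff_of_false (fun h => hlr i' j (ConnectedComponent.sound h.symm.reachable)) ?_
    simp
  · simp only [sum_adj_inr, top_adj]
    show G.Adj (g (e2 j)) (g (e2 j')) ↔ _
    rw [hgadj, e2.injective.ne_iff]

lemma ci_lower [Fintype V] (k m : ℕ)
    (e : G ≃g ((⊥ : SimpleGraph (Fin k)) ⊕g (⊤ : SimpleGraph (Fin m)))) :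
    k + Nat.card {H : (⊤ : SimpleGraph (Fin m)).Subgraph // H.Connected} ≤ coreIndex G := by
  let r : (⊤ : SimpleGraph (Fin m)) ↪g G :=
    (Embedding.sumInr (G := (⊥ : SimpleGraph (Fin k)))).trans e.symm.toEmbedding
  have hr : ∀ j, r j = e.symm (Sum.inr j) := fun j => rfl
  let F : Fin k ⊕ {H : (⊤ : SimpleGraph (Fin m)).Subgraph // H.Connected} →
      {H : G.Subgraph // H.Connected} :=
    Sum.elim (fun i => ⟨G.singletonSubgraph (e.symm (Sum.inl i)),
        Subgraph.singletonSubgraph_connected⟩)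
      (fun H => ⟨H.1.map r.toHom, ci_map_connected _ H.2⟩)
  have aux : ∀ i H, F (Sum.inl i) ≠ F (Sum.inr H) := by
    intro i H h
    have h2 := congrArg (fun K => K.1.verts) h
    simp only [F, Sum.elim_inl, Sum.elim_inr, singletonSubgraph_verts] at h2
    have : e.symm (Sum.inl i) ∈ (H.1.map r.toHom).verts := by rw [← h2]; simp
    obtain ⟨j, hj, hj'⟩ := this
    have h3 : e.symm (Sum.inr j) = e.symm (Sum.inl i) := hj'
    simpa using e.symm.injective h3
  have le_aux : ∀ H H' : (⊤ : SimpleGraph (Fin m)).Subgraph,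
      H.map r.toHom = H'.map r.toHom → H ≤ H' := by
    intro H H' h
    constructor
    · intro x hx
      have : r x ∈ (H'.map r.toHom).verts := by rw [← h]; exact ⟨x, hx, rfl⟩
      obtain ⟨y, hy, hy'⟩ := this
      rwa [← r.injective hy']
    · intro x y hxy
      have : (H'.map r.toHom).Adj (r x) (r y) := by rw [← h]; exact ⟨x, y, hxy, rfl, rfl⟩
      obtain ⟨u, v, huv, hu, hv⟩ := this
      rwa [← r.injective hu, ← r.injective hv]
  have hF : Function.Injective F := by
    rintro (i | H) (i' | H') h
    · have h2 := congrArg (fun K => K.1.verts) h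
      simpa [F] using h2
    · exact absurd h (aux _ _)
    · exact absurd h.symm (aux _ _)
    · have h2 := congrArg Subtype.val h
      congr 1
      exact Subtype.ext (le_antisymm (le_aux _ _ h2) (le_aux _ _ h2.symm))
  have := Nat.card_le_card_of_injective F hF
  rwa [Nat.card_sum, Nat.card_fin] at this

end Main

/-- If `G` is a graph on `n` vertices with `k` connected components, then
`F(G) ≤ (k-1) + ∑_{i=1}^{n-k+1} C(n-k+1,i) h_i`, with equality if and only if `G` is the
disjoint union of `k-1` isolated vertices and a complete graph `K_{n-k+1}`. -/
theorem coreIndex_upper_bound_components {V : Type*} [Fintype V] (G : SimpleGraph V)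
    (n k : ℕ) (hn : Fintype.card V = n) (hk : 1 ≤ k) (hkn : k ≤ n)
    (hcomp : Nat.card G.ConnectedComponent = k) :
    coreIndex G ≤ (k - 1) +
      ∑ i ∈ Finset.Icc 1 (n - k + 1), (n - k + 1).choose i * numConnectedGraphs i ∧
    (coreIndex G = (k - 1) +
        ∑ i ∈ Finset.Icc 1 (n - k + 1), (n - k + 1).choose i * numConnectedGraphs i ↔
      Nonempty (G ≃g ((⊥ : SimpleGraph (Fin (k - 1))) ⊕g
        (⊤ : SimpleGraph (Fin (n - k + 1)))))) := by
  classical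
  have hN := ci_cardN (G := G) n k hn hcomp
  have hW : Fintype.card (Option (CiN G)) = n - k + 1 := by
    rw [← Nat.card_eq_fintype_card, Finite.card_option, hN]
  have hA := ci_complete (Option (CiN G)) _ hW
  have hA' := ci_complete (Fin (n - k + 1)) _ (Fintype.card_fin _)
  have hle := Nat.card_le_card_of_injective _ (ciPhi_inj (G := G))
  rw [Finite.card_option, Nat.card_sum, hcomp, hA] at hle
  have hle' : coreIndex G + 1 ≤ k + ∑ i ∈ Finset.Icc 1 (n - k + 1),
      (n - k + 1).choose i * numConnectedGraphs i := hle
  refine ⟨by omega, ?_, ?_⟩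
  · intro heq
    refine ci_iso_of_surj n k hn hk hcomp ?_
    have hcard : Nat.card (Option {H : G.Subgraph // H.Connected}) =
        Nat.card (G.ConnectedComponent ⊕
          {H : (⊤ : SimpleGraph (Option (CiN G))).Subgraph // H.Connected}) := by
      rw [Finite.card_option, Nat.card_sum, hcomp, hA]
      show coreIndex G + 1 = _
      omega
    exact ((Nat.bijective_iff_injective_and_card _).2 ⟨ciPhi_inj, hcard⟩).2
  · rintro ⟨e⟩
    have := ci_lower (k - 1) (n - k + 1) e
    rw [hA'] at this
    omega
end

section
/- Let G be a connected graph on at least 2 vertices with a vertex v, and for k, l ≥ 1 let G_{k,l} be the graph obtained by attaching two new disjoint paths of lengths k and l at v. If 1 ≤ k ≤ l, then F(G_{k-1,l+1}) < F(G_{k,l}). -/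
open SimpleGraph

/-- The graph `G_{k,l}` obtained from `G` by attaching at the vertex `v` two new
disjoint pendant paths, `v v₁ … v_k` of length `k` and `v u₁ … u_l` of length `l`. -/
def attachTwoPaths {V : Type*} (G : SimpleGraph V) (v : V) (k l : ℕ) :
    SimpleGraph (V ⊕ (Fin k ⊕ Fin l)) :=
  SimpleGraph.fromRel (fun x y =>
    (∃ a b : V, x = Sum.inl a ∧ y = Sum.inl b ∧ G.Adj a b) ∨
    (∃ i : Fin k, x = Sum.inl v ∧ y = Sum.inr (Sum.inl i) ∧ (i : ℕ) = 0) ∨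
    (∃ i : Fin l, x = Sum.inl v ∧ y = Sum.inr (Sum.inr i) ∧ (i : ℕ) = 0) ∨
    (∃ i j : Fin k, x = Sum.inr (Sum.inl i) ∧ y = Sum.inr (Sum.inl j) ∧
      (j : ℕ) = (i : ℕ) + 1) ∨
    (∃ i j : Fin l, x = Sum.inr (Sum.inr i) ∧ y = Sum.inr (Sum.inr j) ∧
      (j : ℕ) = (i : ℕ) + 1))

namespace Graft

/-- Connectedness is transported along vertex maps that send edges to edges or points. -/
theorem conn_of_map {V W : Type*} {G : SimpleGraph V} {M : SimpleGraph W}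
    (H : G.Subgraph) (K : M.Subgraph) (f : V → W) (hH : H.Connected)
    (hv : ∀ x ∈ H.verts, f x ∈ K.verts)
    (ha : ∀ x y, H.Adj x y → f x = f y ∨ K.Adj (f x) (f y))
    (hs : ∀ z ∈ K.verts, ∃ x ∈ H.verts, f x = z) : K.Connected := by
  have key : ∀ (a b : H.verts), H.coe.Walk a b →
      K.coe.Reachable ⟨f a, hv a a.2⟩ ⟨f b, hv b b.2⟩ := by
    intro a b p
    induction p with
    | nil => exact Reachable.refl _
    | @cons x y z h p ih =>
      refine Reachable.trans ?_ ih
      rcases ha x y h with h1 | h1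
      · have : (⟨f x, hv x x.2⟩ : K.verts) = ⟨f y, hv y y.2⟩ := Subtype.ext h1
        rw [this]
      · exact Adj.reachable (by simpa using h1)
  rw [Subgraph.connected_iff]
  refine ⟨⟨?_⟩, ?_⟩
  · rintro ⟨a, ha'⟩ ⟨b, hb'⟩
    obtain ⟨x, hx, rfl⟩ := hs a ha'
    obtain ⟨y, hy, rfl⟩ := hs b hb'
    obtain ⟨p⟩ := hH.preconnected ⟨x, hx⟩ ⟨y, hy⟩
    exact key _ _ p
  · obtain ⟨x, hx⟩ := hH.nonempty
    exact ⟨f x, hv x hx⟩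

/-- The set of connected subgraphs with vertices in `S` and containing `T`. -/
def conns {W : Type*} (M : SimpleGraph W) (S T : Set W) : Set M.Subgraph :=
  {H | H.Connected ∧ H.verts ⊆ S ∧ T ⊆ H.verts}

theorem finite_conns {W : Type*} (M : SimpleGraph W) (S T : Set W) (hS : S.Finite) :
    (conns M S T).Finite := by
  have hfin : ((𝒫 S) ×ˢ (𝒫 (S ×ˢ S))).Finite :=
    hS.finite_subsets.prod (hS.prod hS).finite_subsets
  refine Set.Finite.of_injOn (f := fun H : M.Subgraph => (H.verts, {q : W × W | H.Adj q.1 q.2}))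
    ?_ ?_ hfin
  · rintro H ⟨-, h, -⟩
    refine ⟨h, ?_⟩
    rintro ⟨x, y⟩ hxy
    exact ⟨h (H.edge_vert hxy), h (H.edge_vert (Subgraph.Adj.symm hxy))⟩
  · intro H _ K _ h
    simp only [Prod.mk.injEq] at h
    refine Subgraph.ext h.1 ?_
    funext x y
    have := Set.ext_iff.1 h.2 (x, y)
    simpa using this

theorem transfer {V W : Type*} [Finite V] {G : SimpleGraph V} {M : SimpleGraph W} (f : G ↪g M) :
    (coreIndex G : ℕ∞) = (conns M (Set.range f) ∅).encard := by
  classical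
  have h1 : (conns M (Set.range f) ∅) = (Subgraph.map f.toHom) '' {H : G.Subgraph | H.Connected} := by
    ext K
    constructor
    · rintro ⟨hK, hr, -⟩
      obtain ⟨w, hw⟩ := hK.nonempty
      obtain ⟨x0, -⟩ := hr hw
      have : Nonempty V := ⟨x0⟩
      have hinv : ∀ x, Function.invFun f (f x) = x := Function.leftInverse_invFun f.injective
      refine ⟨K.comap f.toHom, ?_, ?_⟩
      · refine conn_of_map K _ (Function.invFun f) hK ?_ ?_ ?_
        · intro y hy
          obtain ⟨x, rfl⟩ := hr hy
          rw [hinv]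
          exact hy
        · intro y z h
          obtain ⟨x, rfl⟩ := hr (K.edge_vert h)
          obtain ⟨x', rfl⟩ := hr (K.edge_vert (Subgraph.Adj.symm h))
          right
          rw [hinv, hinv]
          exact ⟨f.map_adj_iff.1 (K.adj_sub h), h⟩
        · intro z hz
          exact ⟨f z, hz, hinv z⟩
      · refine Subgraph.ext ?_ ?_
        · ext y
          constructor
          · rintro ⟨x, hx, rfl⟩
            exact hx
          · intro hy
            obtain ⟨x, rfl⟩ := hr hy
            exact ⟨x, hy, rfl⟩
        · funext y z
          apply propext
          constructor
          · rintro ⟨a, b, h, rfl, rfl⟩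
            exact h.2
          · intro h
            obtain ⟨x, rfl⟩ := hr (K.edge_vert h)
            obtain ⟨x', rfl⟩ := hr (K.edge_vert (Subgraph.Adj.symm h))
            exact ⟨x, x', ⟨f.map_adj_iff.1 (K.adj_sub h), h⟩, rfl, rfl⟩
    · rintro ⟨H, hH, rfl⟩
      refine ⟨conn_of_map H _ f hH ?_ ?_ ?_, ?_, by simp⟩
      · intro x hx
        exact ⟨x, hx, rfl⟩
      · intro x y h
        exact Or.inr ⟨x, y, h, rfl, rfl⟩
      · rintro z ⟨x, hx, rfl⟩
        exact ⟨x, hx, rfl⟩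
      · rintro z ⟨x, hx, rfl⟩
        exact ⟨x, rfl⟩
  have hinj : Function.Injective (Subgraph.map f.toHom) := by
    intro H K h
    refine Subgraph.ext ?_ ?_
    · have := congrArg Subgraph.verts h
      exact f.injective.image_injective this
    · funext x y
      have := congrFun (congrFun (congrArg Subgraph.Adj h) (f x)) (f y)
      apply propext
      constructor
      · intro h1
        have h2 : (K.map f.toHom).Adj (f x) (f y) := h ▸ ⟨x, y, h1, rfl, rfl⟩
        obtain ⟨a, b, hab, ha, hb⟩ := h2
        rwa [← f.injective ha, ← f.injective hb]
      · intro h1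
        have h2 : (H.map f.toHom).Adj (f x) (f y) := h ▸ ⟨x, y, h1, rfl, rfl⟩
        obtain ⟨a, b, hab, ha, hb⟩ := h2
        rwa [← f.injective ha, ← f.injective hb]
  rw [h1, hinj.injOn.encard_image]
  have hfin : ({H : G.Subgraph | H.Connected}).Finite := by
    have := finite_conns G Set.univ ∅ Set.finite_univ
    refine this.subset ?_
    intro H hH
    exact ⟨hH, by simp, by simp⟩
  rw [← hfin.cast_ncard_eq]
  rfl

section pendant
variable {W : Type*} (M : SimpleGraph W) (S T : Set W) (u w : W)

theorem pendant_aux (hw : w ∉ S) (huw : M.Adj u w)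
    (hn : ∀ x ∈ S, M.Adj x w → x = u) (hT : T ⊆ S) :
    (conns M (insert w S) (insert w T) \ {M.singletonSubgraph w}).encard
      = (conns M S (insert u T)).encard := by
  classical
  have himg : conns M (insert w S) (insert w T) \ {M.singletonSubgraph w} =
      (fun K => K ⊔ M.subgraphOfAdj huw) '' conns M S (insert u T) := by
    ext H
    constructor
    · rintro ⟨⟨hH, hS, hwT⟩, hne⟩
      have hwH : w ∈ H.verts := hwT (Set.mem_insert _ _)
      have hnt : Nontrivial H.verts := by
        by_contra hcon
        rw [Set.nontrivial_coe_sort, Set.not_nontrivial_iff] at hcon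
        apply hne
        refine Subgraph.ext ?_ ?_
        · ext x
          constructor
          · intro hx
            exact hcon hx hwH
          · rintro rfl
            exact hwH
        · funext x y
          apply propext
          constructor
          · intro h
            exact absurd (hcon (H.edge_vert h) (H.edge_vert (Subgraph.Adj.symm h))) (H.adj_sub h).ne
          · intro h
            exact absurd h (by simp)
      obtain ⟨u', hu'⟩ := hH.preconnected.exists_adj_of_nontrivial ⟨w, hwH⟩
      have only : ∀ x, H.Adj x w → x = u := by
        intro x hx
        refine hn x ?_ (H.adj_sub hx)
        rcases hS (H.edge_vert hx) with h | h
        · exact absurd h (H.adj_sub hx).ne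
        · exact h
      have : u' = u := only _ (Subgraph.Adj.symm hu')
      subst this
      have huH : u' ∈ H.verts := H.edge_vert (Subgraph.Adj.symm hu')
      refine ⟨H.deleteVerts {w}, ⟨?_, ?_, ?_⟩, ?_⟩
      · refine conn_of_map H _ (fun x => if x = w then u' else x) hH ?_ ?_ ?_
        · intro x hx
          split_ifs with h
          · exact ⟨huH, huw.ne⟩
          · exact ⟨hx, h⟩
        · intro x y hxy
          split_ifs with h1 h2 h2
          · exact Or.inl rfl
          · subst h1
            exact Or.inl (only y (Subgraph.Adj.symm hxy)).symm
          · subst h2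
            exact Or.inl (only x hxy)
          · right
            rw [Subgraph.deleteVerts_adj]
            exact ⟨H.edge_vert hxy, h1, H.edge_vert (Subgraph.Adj.symm hxy), h2, hxy⟩
        · rintro z ⟨hz, hzw⟩
          exact ⟨z, hz, if_neg hzw⟩
      · rintro x ⟨hx, hxw⟩
        exact (hS hx).resolve_left hxw
      · rintro x (rfl | hx)
        · exact ⟨huH, huw.ne⟩
        · refine ⟨hwT (Or.inr hx), ?_⟩
          rintro rfl
          exact hw (hT hx)
      · refine Subgraph.ext ?_ ?_
        · ext x
          simp only [Subgraph.verts_sup, Subgraph.deleteVerts_verts, subgraphOfAdj_verts,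
            Set.mem_union, Set.mem_sdiff, Set.mem_insert_iff, Set.mem_singleton_iff]
          constructor
          · rintro (h | rfl | rfl)
            · exact h.1
            · exact huH
            · exact hwH
          · intro h
            tauto
        · funext x y
          apply propext
          simp only [Subgraph.sup_adj, Subgraph.deleteVerts_adj, subgraphOfAdj_adj,
            Set.mem_singleton_iff, Sym2.eq_iff]
          constructor
          · rintro (h | ⟨rfl, rfl⟩ | ⟨rfl, rfl⟩)
            · exact h.2.2.2.2
            · exact Subgraph.Adj.symm hu'
            · exact hu'
          · intro h
            by_cases hx : x = w
            · subst hx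
              right; right
              exact ⟨(only y (Subgraph.Adj.symm h)).symm, rfl⟩
            · by_cases hy : y = w
              · subst hy
                right; left
                exact ⟨(only x h).symm, rfl⟩
              · left
                exact ⟨H.edge_vert h, hx, H.edge_vert (Subgraph.Adj.symm h), hy, h⟩
    · rintro ⟨K, ⟨hK, hKS, hKT⟩, rfl⟩
      have huK : u ∈ K.verts := hKT (Set.mem_insert _ _)
      refine ⟨⟨?_, ?_, ?_⟩, ?_⟩
      · refine Subgraph.connected_sup hK.preconnected
          (Subgraph.subgraphOfAdj_connected huw).preconnected ⟨u, huK, ?_⟩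
        simp
      · rintro x (hx | hx)
        · exact Or.inr (hKS hx)
        · rcases hx with rfl | rfl
          · exact Or.inr (hKS huK)
          · exact Or.inl rfl
      · rintro x (rfl | hx)
        · exact Or.inr (by simp)
        · exact Or.inl (hKT (Or.inr hx))
      · intro h
        have h2 : u ∈ (M.singletonSubgraph w).verts := by
          have h3 : (K ⊔ M.subgraphOfAdj huw) = M.singletonSubgraph w := h
          rw [← h3]
          exact Or.inl huK
        exact huw.ne h2
  rw [himg]
  apply Set.InjOn.encard_image
  intro K hK L hL hKL
  have key : ∀ K ∈ conns M S (insert u T), (K ⊔ M.subgraphOfAdj huw).deleteVerts {w} = K := by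
    rintro K ⟨hK, hKS, hKT⟩
    have huK : u ∈ K.verts := hKT (Set.mem_insert _ _)
    have hwK : w ∉ K.verts := fun h => hw (hKS h)
    refine Subgraph.ext ?_ ?_
    · ext x
      simp only [Subgraph.verts_sup, Subgraph.deleteVerts_verts, subgraphOfAdj_verts,
        Set.mem_union, Set.mem_sdiff, Set.mem_insert_iff, Set.mem_singleton_iff]
      constructor
      · rintro ⟨h | rfl | rfl, h2⟩
        · exact h
        · exact huK
        · exact absurd rfl h2
      · intro hxK
        refine ⟨Or.inl hxK, ?_⟩
        rintro rfl
        exact hwK hxK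
    · funext x y
      apply propext
      simp only [Subgraph.sup_adj, Subgraph.deleteVerts_adj, subgraphOfAdj_adj,
        Set.mem_singleton_iff, Sym2.eq_iff]
      constructor
      · rintro ⟨-, h1, -, h2, h | ⟨rfl, rfl⟩ | ⟨rfl, rfl⟩⟩
        · exact h
        · exact absurd rfl h2
        · exact absurd rfl h1
      · intro h
        refine ⟨Or.inl (K.edge_vert h), ?_, Or.inl (K.edge_vert (Subgraph.Adj.symm h)), ?_, Or.inl h⟩
        · rintro rfl
          exact hwK (K.edge_vert h)
        · rintro rfl
          exact hwK (K.edge_vert (Subgraph.Adj.symm h))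
  have h' : K ⊔ M.subgraphOfAdj huw = L ⊔ M.subgraphOfAdj huw := hKL
  rw [← key K hK, h', key L hL]

theorem pendant_ne (hw : w ∉ S) (huw : M.Adj u w)
    (hn : ∀ x ∈ S, M.Adj x w → x = u) (hT : T ⊆ S) (hne : T.Nonempty) :
    (conns M (insert w S) (insert w T)).encard = (conns M S (insert u T)).encard := by
  rw [← pendant_aux M S T u w hw huw hn hT, Set.sdiff_singleton_eq_self]
  rintro ⟨-, -, h⟩
  obtain ⟨x, hx⟩ := hne
  have : x = w := h (Or.inr hx)
  subst this
  exact hw (hT hx)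

theorem pendant_single (hw : w ∉ S) (huw : M.Adj u w)
    (hn : ∀ x ∈ S, M.Adj x w → x = u) :
    (conns M (insert w S) {w}).encard = (conns M S {u}).encard + 1 := by
  have h := pendant_aux M S ∅ u w hw huw hn (by simp)
  simp only [insert_empty_eq] at h
  rw [← h, Set.encard_sdiff_singleton_add_one]
  refine ⟨Subgraph.singletonSubgraph_connected, ?_, ?_⟩ <;> simp

theorem pendant_split (hw : w ∉ S) :
    (conns M (insert w S) T).encard
      = (conns M S T).encard + (conns M (insert w S) (insert w T)).encard := by
  rw [← Set.encard_union_eq]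
  · congr 1
    ext H
    constructor
    · rintro ⟨h1, h2, h3⟩
      by_cases hwH : w ∈ H.verts
      · exact Or.inr ⟨h1, h2, Set.insert_subset hwH h3⟩
      · refine Or.inl ⟨h1, fun x hx => (h2 hx).resolve_left ?_, h3⟩
        rintro rfl
        exact hwH hx
    · rintro (⟨h1, h2, h3⟩ | ⟨h1, h2, h3⟩)
      · exact ⟨h1, h2.trans (Set.subset_insert _ _), h3⟩
      · exact ⟨h1, h2, (Set.subset_insert _ _).trans h3⟩
  · rw [Set.disjoint_left]
    rintro H ⟨-, h, -⟩ ⟨-, -, h2⟩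
    exact hw (h (h2 (Set.mem_insert _ _)))

end pendant

section chain
variable {W : Type*} (M : SimpleGraph W) (S : ℕ → Set W) (p : ℕ → W)

theorem chain_end
    (hS : ∀ i, S (i + 1) = insert (p (i + 1)) (S i))
    (hp : ∀ i, p (i + 1) ∉ S i)
    (hadj : ∀ i, M.Adj (p i) (p (i + 1)))
    (hn : ∀ i, ∀ x ∈ S i, M.Adj x (p (i + 1)) → x = p i) (n : ℕ) :
    (conns M (S n) {p n}).encard = (conns M (S 0) {p 0}).encard + n := by
  induction n with
  | zero => simp
  | succ n ih =>
    rw [hS, pendant_single M (S n) (p n) (p (n + 1)) (hp n) (hadj n) (hn n), ih]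
    push_cast
    rw [add_assoc]

theorem chain_mem
    (h0 : p 0 ∈ S 0)
    (hS : ∀ i, S (i + 1) = insert (p (i + 1)) (S i)) (n : ℕ) : p 0 ∈ S n := by
  induction n with
  | zero => exact h0
  | succ n ih =>
    rw [hS]
    exact Or.inr ih

theorem chain_both
    (h0 : p 0 ∈ S 0)
    (hS : ∀ i, S (i + 1) = insert (p (i + 1)) (S i))
    (hp : ∀ i, p (i + 1) ∉ S i)
    (hadj : ∀ i, M.Adj (p i) (p (i + 1)))
    (hn : ∀ i, ∀ x ∈ S i, M.Adj x (p (i + 1)) → x = p i) (n : ℕ) :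
    (conns M (S n) (insert (p n) {p 0})).encard = (conns M (S 0) {p 0}).encard := by
  induction n with
  | zero => simp
  | succ n ih =>
    rw [hS, pendant_ne M (S n) {p 0} (p n) (p (n + 1)) (hp n) (hadj n) (hn n) ?_ (by simp), ih]
    simpa using chain_mem S p h0 hS n

theorem chain_start
    (h0 : p 0 ∈ S 0)
    (hS : ∀ i, S (i + 1) = insert (p (i + 1)) (S i))
    (hp : ∀ i, p (i + 1) ∉ S i)
    (hadj : ∀ i, M.Adj (p i) (p (i + 1)))
    (hn : ∀ i, ∀ x ∈ S i, M.Adj x (p (i + 1)) → x = p i) (n : ℕ) :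
    (conns M (S n) {p 0}).encard = (n + 1) * (conns M (S 0) {p 0}).encard := by
  induction n with
  | zero => simp
  | succ n ih =>
    have h := chain_both M S p h0 hS hp hadj hn (n + 1)
    rw [hS] at h ⊢
    rw [pendant_split M (S n) {p 0} (p (n + 1)) (hp n), h, ih]
    push_cast
    ring

end chain

/-- The graph with two infinite paths attached. -/
def big {V : Type*} (G : SimpleGraph V) (v : V) : SimpleGraph (V ⊕ (ℕ ⊕ ℕ)) :=
  SimpleGraph.fromRel (fun x y =>
    (∃ a b : V, x = Sum.inl a ∧ y = Sum.inl b ∧ G.Adj a b) ∨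
    (∃ i : ℕ, x = Sum.inl v ∧ y = Sum.inr (Sum.inl i) ∧ i = 0) ∨
    (∃ i : ℕ, x = Sum.inl v ∧ y = Sum.inr (Sum.inr i) ∧ i = 0) ∨
    (∃ i j : ℕ, x = Sum.inr (Sum.inl i) ∧ y = Sum.inr (Sum.inl j) ∧ j = i + 1) ∨
    (∃ i j : ℕ, x = Sum.inr (Sum.inr i) ∧ y = Sum.inr (Sum.inr j) ∧ j = i + 1))

/-- Vertices of the truncation. -/
def trunc (V : Type*) (k l : ℕ) : Set (V ⊕ (ℕ ⊕ ℕ)) :=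
  {x | match x with
    | Sum.inl _ => True
    | Sum.inr (Sum.inl i) => i < k
    | Sum.inr (Sum.inr j) => j < l}

/-- The embedding of `attachTwoPaths` into the big graph. -/
def emb {V : Type*} (G : SimpleGraph V) (v : V) (k l : ℕ) :
    attachTwoPaths G v k l ↪g big G v where
  toFun := Sum.map id (Sum.map Fin.val Fin.val)
  inj' := Sum.map_injective.2 ⟨Function.injective_id,
    Sum.map_injective.2 ⟨Fin.val_injective, Fin.val_injective⟩⟩
  map_rel_iff' := by
    rintro (a | a | a) (b | b | b) <;>
      simp [attachTwoPaths, big, Fin.val_inj]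

theorem range_emb {V : Type*} (G : SimpleGraph V) (v : V) (k l : ℕ) :
    Set.range (emb G v k l) = trunc V k l := by
  ext x
  constructor
  · rintro ⟨a | a | a, rfl⟩ <;> simp [emb, trunc]
  · rcases x with a | a | a
    · intro _
      exact ⟨Sum.inl a, rfl⟩
    · intro h
      exact ⟨Sum.inr (Sum.inl ⟨a, h⟩), rfl⟩
    · intro h
      exact ⟨Sum.inr (Sum.inr ⟨a, h⟩), rfl⟩

theorem core_eq {V : Type*} [Finite V] (G : SimpleGraph V) (v : V) (k l : ℕ) :
    (coreIndex (attachTwoPaths G v k l) : ℕ∞) = (conns (big G v) (trunc V k l) ∅).encard := by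
  rw [← range_emb G v k l]
  exact transfer (emb G v k l)

theorem finite_trunc {V : Type*} [Finite V] (G : SimpleGraph V) (v : V) (k l : ℕ) :
    (trunc V k l).Finite := by
  rw [← range_emb G v k l]
  exact Set.finite_range _

/-- first path -/
def pp {V : Type*} (v : V) : ℕ → V ⊕ (ℕ ⊕ ℕ)
  | 0 => Sum.inl v
  | i + 1 => Sum.inr (Sum.inl i)

/-- second path -/
def qq {V : Type*} (v : V) : ℕ → V ⊕ (ℕ ⊕ ℕ)
  | 0 => Sum.inl v
  | i + 1 => Sum.inr (Sum.inr i)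

section facts
variable {V : Type*} (G : SimpleGraph V) (v : V) (k l : ℕ)

theorem pS : trunc V (k + 1) l = insert (pp v (k + 1)) (trunc V k l) := by
  ext (x | x | x) <;> simp [trunc, pp]
  omega

theorem qS : trunc V k (l + 1) = insert (qq v (l + 1)) (trunc V k l) := by
  ext (x | x | x) <;> simp [trunc, qq]
  omega

theorem p_notMem : pp v (k + 1) ∉ trunc V k l := by
  simp [trunc, pp]

theorem q_notMem : qq v (l + 1) ∉ trunc V k l := by
  simp [trunc, qq]

theorem p_adj : (big G v).Adj (pp v k) (pp v (k + 1)) := by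
  cases k <;> simp [big, pp]

theorem q_adj : (big G v).Adj (qq v l) (qq v (l + 1)) := by
  cases l <;> simp [big, qq]

theorem p_only : ∀ x ∈ trunc V k l, (big G v).Adj x (pp v (k + 1)) → x = pp v k := by
  rintro (x | x | x) hx h
  · cases k <;> simp_all [big, pp]
  · cases k <;> simp_all [big, pp, trunc] <;> omega
  · simp_all [big, pp]

theorem q_only : ∀ x ∈ trunc V k l, (big G v).Adj x (qq v (l + 1)) → x = qq v l := by
  rintro (x | x | x) hx h
  · cases l <;> simp_all [big, qq]
  · simp_all [big, qq]
  · cases l <;> simp_all [big, qq, trunc] <;> omega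

theorem count_p :
    (conns (big G v) (trunc V k l) {pp v k}).encard
      = (l + 1) * (conns (big G v) (trunc V 0 0) {Sum.inl v}).encard + k := by
  rw [chain_end (big G v) (fun i => trunc V i l) (pp v) (fun i => pS v i l)
    (fun i => p_notMem v i l) (fun i => p_adj G v i) (fun i => p_only G v i l) k]
  congr 1
  exact chain_start (big G v) (fun j => trunc V 0 j) (qq v) (by simp [trunc, qq])
    (fun i => qS v 0 i)
    (fun i => q_notMem v 0 i) (fun i => q_adj G v i) (fun i => q_only G v 0 i) l

theorem count_q :
    (conns (big G v) (trunc V k l) {qq v l}).encard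
      = (k + 1) * (conns (big G v) (trunc V 0 0) {Sum.inl v}).encard + l := by
  rw [chain_end (big G v) (fun i => trunc V k i) (qq v) (fun i => qS v k i)
    (fun i => q_notMem v k i) (fun i => q_adj G v i) (fun i => q_only G v k i) l]
  congr 1
  exact chain_start (big G v) (fun j => trunc V j 0) (pp v) (by simp [trunc, pp])
    (fun i => pS v i 0)
    (fun i => p_notMem v i 0) (fun i => p_adj G v i) (fun i => p_only G v i 0) k

theorem core_p [Finite V] : (coreIndex (attachTwoPaths G v (k + 1) l) : ℕ∞)
    = (conns (big G v) (trunc V k l) ∅).encard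
      + ((l + 1) * (conns (big G v) (trunc V 0 0) {Sum.inl v}).encard + k + 1) := by
  rw [core_eq, pS v, pendant_split _ _ _ _ (p_notMem v k l), ← count_p, insert_empty_eq,
    pendant_single _ _ (pp v k) _ (p_notMem v k l) (p_adj G v k) (p_only G v k l)]

theorem core_q [Finite V] : (coreIndex (attachTwoPaths G v k (l + 1)) : ℕ∞)
    = (conns (big G v) (trunc V k l) ∅).encard
      + ((k + 1) * (conns (big G v) (trunc V 0 0) {Sum.inl v}).encard + l + 1) := by
  rw [core_eq, qS v, pendant_split _ _ _ _ (q_notMem v k l), ← count_q, insert_empty_eq,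
    pendant_single _ _ (qq v l) _ (q_notMem v k l) (q_adj G v l) (q_only G v k l)]

theorem one_lt_base (u : V) (h : G.Adj v u) :
    1 < (conns (big G v) (trunc V 0 0) {Sum.inl v}).encard := by
  have hadj : (big G v).Adj (Sum.inl v) (Sum.inl u) := by
    simp [big, h, h.ne]
  rw [Set.one_lt_encard_iff]
  refine ⟨(big G v).singletonSubgraph (Sum.inl v), (big G v).subgraphOfAdj hadj,
    ⟨Subgraph.singletonSubgraph_connected, ?_, ?_⟩,
    ⟨Subgraph.subgraphOfAdj_connected hadj, ?_, ?_⟩, ?_⟩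
  · simp [trunc]
  · simp
  · rintro x (rfl | rfl) <;> simp [trunc]
  · simp
  · intro heq
    have h2 : Sum.inl u ∈ ((big G v).singletonSubgraph (Sum.inl v)).verts := by
      rw [heq]; simp
    have h3 : (Sum.inl u : V ⊕ (ℕ ⊕ ℕ)) = Sum.inl v := h2
    exact h.ne (Sum.inl_injective h3).symm

end facts

end Graft

/-- Grafting an edge decreases the core index: for a connected graph `G` on at least two
vertices, a vertex `v` of `G`, and `1 ≤ k ≤ l`, we have
`F(G_{k-1, l+1}) < F(G_{k, l})`. -/
theorem coreIndex_graft_lt {V : Type*} [Fintype V] (G : SimpleGraph V) (v : V)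
    (hcard : 2 ≤ Fintype.card V) (hconn : G.Connected) (k l : ℕ)
    (hk : 1 ≤ k) (hkl : k ≤ l) :
    coreIndex (attachTwoPaths G v (k - 1) (l + 1)) <
    coreIndex (attachTwoPaths G v k l) := by
  obtain ⟨k, rfl⟩ : ∃ m, k = m + 1 := ⟨k - 1, by omega⟩
  rw [Nat.add_sub_cancel]
  have hnt : Nontrivial V := Fintype.one_lt_card_iff_nontrivial.1 (by omega)
  obtain ⟨u, hu⟩ := hconn.preconnected.exists_adj_of_nontrivial v
  have h1 := Graft.core_p G v k l
  have h2 := Graft.core_q G v k l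
  have h3 := Graft.one_lt_base G v u hu
  rw [← (Graft.finite_conns _ _ _ (Graft.finite_trunc G v k l)).cast_ncard_eq,
    ← (Graft.finite_conns _ _ _ (Graft.finite_trunc G v 0 0)).cast_ncard_eq] at h1 h2
  rw [← (Graft.finite_conns _ _ _ (Graft.finite_trunc G v 0 0)).cast_ncard_eq] at h3
  norm_cast at h1 h2 h3
  rw [h1, h2]
  nlinarith
end

section
/- Let G be a connected graph on n ≥ 2 vertices with vertices u, v such that f_G(u) ≥ f_G(v), and for n_1, n_2 ≥ 1 let G_{uv}(n_1,n_2) be obtained by attaching n_1 new pendant vertices at u and n_2 at v. Then F(G_{uv}(n_1+n_2, 0)) > F(G_{uv}(n_1, n_2)). -/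
open SimpleGraph

/-- `numContaining G v`: the number of connected subgraphs of `G` containing `v`. -/
noncomputable def numContaining {V : Type*} (G : SimpleGraph V) (v : V) : ℕ :=
  Nat.card {H : G.Subgraph // H.Connected ∧ v ∈ H.verts}

/-- The graph `G_{uv}(n₁, n₂)` obtained from `G` by attaching `n₁` new pendant vertices
at `u` and `n₂` new pendant vertices at `v`. -/
def attachPendants {V : Type*} (G : SimpleGraph V) (u v : V) (n₁ n₂ : ℕ) :
    SimpleGraph (V ⊕ (Fin n₁ ⊕ Fin n₂)) :=
  SimpleGraph.fromRel (fun x y =>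
    (∃ a b : V, x = Sum.inl a ∧ y = Sum.inl b ∧ G.Adj a b) ∨
    (∃ i : Fin n₁, x = Sum.inl u ∧ y = Sum.inr (Sum.inl i)) ∨
    (∃ i : Fin n₂, x = Sum.inl v ∧ y = Sum.inr (Sum.inr i)))

/-- Attach pendant vertices indexed by `P` along `p : P → V`. -/
def pend {V P : Type*} (G : SimpleGraph V) (p : P → V) : SimpleGraph (V ⊕ P) where
  Adj x y := match x, y with
    | Sum.inl a, Sum.inl b => G.Adj a b
    | Sum.inl a, Sum.inr i => a = p i
    | Sum.inr i, Sum.inl a => a = p i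
    | Sum.inr _, Sum.inr _ => False
  symm := ⟨by
    rintro (a | i) (b | j) h
    · exact G.symm.symm _ _ h
    · exact h
    · exact h
    · exact h⟩
  loopless := ⟨by
    rintro (a | i) h
    · exact G.loopless.irrefl a h
    · exact h⟩

theorem attachPendants_eq {V : Type*} (G : SimpleGraph V) (u v : V) (n₁ n₂ : ℕ) :
    attachPendants G u v n₁ n₂ = pend G (Sum.elim (fun _ => u) (fun _ => v)) := by
  ext x y
  rcases x with a | i | i <;> rcases y with b | j | j <;>
    simp [attachPendants, pend]
  constructor
  · rintro ⟨_, h | h⟩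
    · exact h
    · exact h.symm
  · intro h
    exact ⟨h.ne, Or.inl h⟩

theorem subgraph_connected_iff' {V : Type*} {G : SimpleGraph V} (H : G.Subgraph) :
    H.Connected ↔ H.verts.Nonempty ∧
      ∀ a ∈ H.verts, ∀ b ∈ H.verts, Relation.ReflTransGen H.Adj a b := by
  rw [Subgraph.connected_iff', connected_iff]
  constructor
  · rintro ⟨h, ⟨x⟩⟩
    refine ⟨⟨x, x.2⟩, fun a ha b hb => ?_⟩
    have := (reachable_iff_reflTransGen _ _).1 (h ⟨a, ha⟩ ⟨b, hb⟩)
    exact Relation.ReflTransGen.lift (fun x : H.verts => (x : V)) (fun x y h => h) _ _ this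
  · rintro ⟨⟨x, hx⟩, h⟩
    refine ⟨?_, ⟨x, hx⟩⟩
    rintro ⟨a, ha⟩ ⟨b, hb⟩
    have := h a ha b hb
    clear h
    induction this with
    | refl => exact Reachable.refl _
    | tail _ h2 ih =>
      exact (ih (H.edge_vert h2)).trans (Adj.reachable (by exact h2))

/-- Extend a subgraph by pendant vertices. -/
def extSub {V P : Type*} (G : SimpleGraph V) (p : P → V) (H : G.Subgraph) (S : Set P)
    (hS : ∀ i ∈ S, p i ∈ H.verts) : (pend G p).Subgraph where
  verts := {x | match x with
    | Sum.inl a => a ∈ H.verts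
    | Sum.inr i => i ∈ S}
  Adj x y := match x, y with
    | Sum.inl a, Sum.inl b => H.Adj a b
    | Sum.inl a, Sum.inr i => a = p i ∧ i ∈ S
    | Sum.inr i, Sum.inl a => a = p i ∧ i ∈ S
    | Sum.inr _, Sum.inr _ => False
  adj_sub := by
    rintro (a | i) (b | j) h
    · exact H.adj_sub h
    · exact h.1
    · exact h.1
    · exact h
  edge_vert := by
    rintro (a | i) (b | j) h
    · exact H.edge_vert h
    · obtain ⟨h1, h2⟩ := h
      subst h1
      exact hS j h2
    · exact h.2
    · exact h.elim
  symm := ⟨by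
    rintro (a | i) (b | j) h
    · exact H.symm.symm _ _ h
    · exact h
    · exact h
    · exact h⟩

theorem extSub_connected {V P : Type*} (G : SimpleGraph V) (p : P → V) (H : G.Subgraph)
    (S : Set P) (hS : ∀ i ∈ S, p i ∈ H.verts) (hH : H.Connected) :
    (extSub G p H S hS).Connected := by
  rw [subgraph_connected_iff'] at hH ⊢
  obtain ⟨⟨x, hx⟩, h⟩ := hH
  have key : ∀ a ∈ H.verts, ∀ b ∈ H.verts,
      Relation.ReflTransGen (extSub G p H S hS).Adj (Sum.inl a) (Sum.inl b) :=
    fun a ha b hb => Relation.ReflTransGen.lift Sum.inl (fun _ _ h => h) _ _ (h a ha b hb)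
  refine ⟨⟨Sum.inl x, hx⟩, ?_⟩
  have up : ∀ i ∈ S, (extSub G p H S hS).Adj (Sum.inr i) (Sum.inl (p i)) :=
    fun i hi => ⟨rfl, hi⟩
  have dn : ∀ i ∈ S, (extSub G p H S hS).Adj (Sum.inl (p i)) (Sum.inr i) :=
    fun i hi => ⟨rfl, hi⟩
  rintro (a | i) ha (b | j) hb
  · exact key a ha b hb
  · exact (key a ha (p j) (hS j hb)).tail (dn j hb)
  · exact (key (p i) (hS i ha) b hb).head (up i ha)
  · exact ((key (p i) (hS i ha) (p j) (hS j hb)).tail (dn j hb)).head (up i ha)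

/-- The map classifying connected subgraphs of `pend G p`. -/
def classify {V P : Type*} (G : SimpleGraph V) (p : P → V) :
    P ⊕ (Σ H : {H : G.Subgraph // H.Connected}, {S : Set P // ∀ i ∈ S, p i ∈ H.1.verts}) →
      {K : (pend G p).Subgraph // K.Connected}
  | Sum.inl i => ⟨(pend G p).singletonSubgraph (Sum.inr i), Subgraph.singletonSubgraph_connected⟩
  | Sum.inr ⟨H, S⟩ => ⟨extSub G p H.1 S.1 S.2, extSub_connected G p H.1 S.1 S.2 H.2⟩

theorem classify_injective {V P : Type*} (G : SimpleGraph V) (p : P → V) :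
    Function.Injective (classify G p) := by
  have aux : ∀ (i : P) (H : G.Subgraph) (S : Set P) (hS : ∀ i ∈ S, p i ∈ H.verts),
      H.Connected → (pend G p).singletonSubgraph (Sum.inr i) ≠ extSub G p H S hS := by
    intro i H S hS hH h
    obtain ⟨x, hx⟩ := ((subgraph_connected_iff' H).1 hH).1
    have h1 : (Sum.inl x : V ⊕ P) ∈ (extSub G p H S hS).verts := hx
    rw [← h] at h1
    simp at h1
  rintro (i | ⟨⟨H, hH⟩, ⟨S, hS⟩⟩) (j | ⟨⟨H', hH'⟩, ⟨S', hS'⟩⟩) h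
  · have h1 := congrArg (fun K => K.1.verts) h
    simpa [classify] using h1
  · exact (aux _ _ _ hS' hH' (congrArg Subtype.val h)).elim
  · exact (aux _ _ _ hS hH (congrArg Subtype.val h).symm).elim
  · have h0 : extSub G p H S hS = extSub G p H' S' hS' := congrArg Subtype.val h
    have e1 : H = H' := by
      ext a b
      · exact (Set.ext_iff.1 (congrArg Subgraph.verts h0) (Sum.inl a))
      · exact (iff_of_eq (congrFun (congrFun (congrArg Subgraph.Adj h0) (Sum.inl a)) (Sum.inl b)))
    have e2 : S = S' := by
      ext i
      exact (Set.ext_iff.1 (congrArg Subgraph.verts h0) (Sum.inr i))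
    subst e1 e2
    rfl

theorem classify_surjective {V P : Type*} (G : SimpleGraph V) (p : P → V) :
    Function.Surjective (classify G p) := by
  rintro ⟨K, hK⟩
  obtain ⟨hne, hc⟩ := (subgraph_connected_iff' K).1 hK
  have nb : ∀ i, Sum.inr i ∈ K.verts → ∀ y ∈ K.verts, y ≠ Sum.inr i →
      K.Adj (Sum.inr i) (Sum.inl (p i)) := by
    intro i hi y hy hne
    rcases Relation.ReflTransGen.cases_head (hc _ hi y hy) with h | ⟨z, hz, _⟩
    · exact (hne h.symm).elim
    · have := K.adj_sub hz
      rcases z with a | j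
      · have h : a = p i := this
        rwa [h] at hz
      · exact this.elim
  by_cases hV : ∃ a : V, Sum.inl a ∈ K.verts
  · obtain ⟨a₀, ha₀⟩ := hV
    have nb' : ∀ i, Sum.inr i ∈ K.verts → K.Adj (Sum.inr i) (Sum.inl (p i)) :=
      fun i hi => nb i hi _ ha₀ (by simp)
    let H : G.Subgraph :=
      { verts := {a | Sum.inl a ∈ K.verts}
        Adj := fun a b => K.Adj (Sum.inl a) (Sum.inl b)
        adj_sub := fun h => K.adj_sub h
        edge_vert := fun h => K.edge_vert h
        symm := ⟨fun _ _ h => K.symm.symm _ _ h⟩ }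
    have hH : H.Connected := by
      rw [subgraph_connected_iff']
      refine ⟨⟨a₀, ha₀⟩, fun a ha b hb => ?_⟩
      have h := hc _ ha _ hb
      have h' : Relation.ReflTransGen H.Adj (Sum.elim id p (Sum.inl a))
          (Sum.elim id p (Sum.inl b)) := by
        refine Relation.ReflTransGen.lift' (Sum.elim id p) ?_ _ _ h
        rintro (x | i) (y | j) hxy
        · exact Relation.ReflTransGen.single hxy
        · have : x = p j := K.adj_sub hxy
          subst this
          exact Relation.ReflTransGen.refl
        · have : y = p i := K.adj_sub hxy
          subst this
          exact Relation.ReflTransGen.refl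
        · exact (K.adj_sub hxy).elim
      exact h'
    refine ⟨Sum.inr ⟨⟨H, hH⟩, ⟨{i | Sum.inr i ∈ K.verts},
      fun i hi => K.edge_vert (K.symm.symm _ _ (nb' i hi))⟩⟩, ?_⟩
    apply Subtype.ext
    apply Subgraph.ext
    · ext x
      rcases x with a | i <;> exact Iff.rfl
    · ext x y
      rcases x with a | i <;> rcases y with b | j
      · exact Iff.rfl
      · constructor
        · rintro ⟨h1, h2⟩
          subst h1
          exact K.symm.symm _ _ (nb' _ h2)
        · intro h
          exact ⟨K.adj_sub h, K.edge_vert (K.symm.symm _ _ h)⟩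
      · constructor
        · rintro ⟨h1, h2⟩
          subst h1
          exact nb' _ h2
        · intro h
          exact ⟨K.adj_sub h, K.edge_vert h⟩
      · exact ⟨fun h => h.elim, fun h => K.adj_sub h⟩
  · push Not at hV
    obtain ⟨a | i, hx⟩ := hne
    · exact (hV a hx).elim
    · have hall : ∀ y ∈ K.verts, y = Sum.inr i := by
        intro y hy
        by_contra hne
        exact hV _ (K.edge_vert (K.symm.symm _ _ (nb i hx y hy hne)))
      refine ⟨Sum.inl i, ?_⟩
      apply Subtype.ext
      apply Subgraph.ext
      · ext y
        constructor
        · intro h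
          have h : y = Sum.inr i := h
          exact h ▸ hx
        · intro h
          exact hall y h
      · ext x y
        constructor
        · intro h
          exact h.elim
        · intro h
          have h1 := hall x (K.edge_vert h)
          have h2 := hall y (K.edge_vert (K.symm.symm _ _ h))
          subst h1
          subst h2
          exact (K.adj_sub h).elim

theorem card_subsets {P : Type*} [Finite P] (q : P → Prop) :
    Nat.card {S : Set P // ∀ i ∈ S, q i} = 2 ^ Nat.card {i // q i} := by
  classical
  have : Fintype P := Fintype.ofFinite P
  have h : Nat.card {S : Set P // ∀ i ∈ S, q i} = Set.ncard (𝒫 {i | q i}) := rfl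
  rw [h, Set.ncard_powerset _ (Set.toFinite _)]
  rfl

open Classical in
theorem card_sum_sub {n₁ n₂ : ℕ} {V : Type*} (u v : V) (s : Set V) :
    Nat.card {i : Fin n₁ ⊕ Fin n₂ // Sum.elim (fun _ => u) (fun _ => v) i ∈ s} =
      (if u ∈ s then n₁ else 0) + (if v ∈ s then n₂ else 0) := by
  rw [Nat.card_congr (Equiv.subtypeSum), Nat.card_sum]
  by_cases hu : u ∈ s <;> by_cases hv : v ∈ s <;> simp [hu, hv]

open Classical in
theorem coreIndex_formula {V : Type*} [Finite V] (G : SimpleGraph V) (u v : V) (n₁ n₂ : ℕ)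
    [Fintype {H : G.Subgraph // H.Connected}] :
    coreIndex (attachPendants G u v n₁ n₂) = (n₁ + n₂) +
      ∑ H : {H : G.Subgraph // H.Connected},
        2 ^ ((if u ∈ H.1.verts then n₁ else 0) + (if v ∈ H.1.verts then n₂ else 0)) := by
  rw [attachPendants_eq, coreIndex, ← Nat.card_congr (Equiv.ofBijective _
    ⟨classify_injective G _, classify_surjective G _⟩), Nat.card_sum, Nat.card_sigma]
  congr 1
  · simp
  · refine Finset.sum_congr rfl fun H _ => ?_
    rw [card_subsets (fun i => Sum.elim (fun _ => u) (fun _ => v) i ∈ H.1.verts), card_sum_sub]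

open Classical in
theorem numContaining_formula {V : Type*} (G : SimpleGraph V) (v : V)
    [Fintype {H : G.Subgraph // H.Connected}] :
    numContaining G v = ∑ H : {H : G.Subgraph // H.Connected},
      if v ∈ H.1.verts then 1 else 0 := by
  rw [numContaining, Finset.sum_boole, ← Fintype.card_subtype, ← Nat.card_eq_fintype_card]
  exact (Nat.card_congr (Equiv.subtypeSubtypeEquivSubtypeInter (fun H : G.Subgraph => H.Connected)
    (fun H => v ∈ H.verts))).symm

/-- If `G` is connected on at least two vertices, `u, v` are vertices with
`f_G(u) ≥ f_G(v)`, and `n₁, n₂ ≥ 1`, then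
`F(G_{uv}(n₁ + n₂, 0)) > F(G_{uv}(n₁, n₂))`. -/
theorem coreIndex_attachPendants_lt {V : Type*} [Fintype V] (G : SimpleGraph V)
    (u v : V) (huv : u ≠ v) (hcard : 2 ≤ Fintype.card V) (hconn : G.Connected)
    (hf : numContaining G v ≤ numContaining G u) (n₁ n₂ : ℕ)
    (h₁ : 1 ≤ n₁) (h₂ : 1 ≤ n₂) :
    coreIndex (attachPendants G u v n₁ n₂) <
    coreIndex (attachPendants G u v (n₁ + n₂) 0) := by

  classical
  have : Fintype {H : G.Subgraph // H.Connected} := Fintype.ofFinite _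
  rw [coreIndex_formula, coreIndex_formula]
  rw [numContaining_formula, numContaining_formula] at hf
  let H₀ : {H : G.Subgraph // H.Connected} :=
    ⟨G.singletonSubgraph u, Subgraph.singletonSubgraph_connected⟩
  have hpos : 1 ≤ ∑ H : {H : G.Subgraph // H.Connected},
      (if u ∈ H.1.verts ∧ v ∉ H.1.verts then (1 : ℤ) else 0) := by
    have h0 : (if u ∈ H₀.1.verts ∧ v ∉ H₀.1.verts then (1 : ℤ) else 0) = 1 := by
      rw [if_pos]
      exact ⟨rfl, fun h => huv (by simpa [H₀] using h.symm)⟩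
    refine h0.symm.le.trans ?_
    exact Finset.single_le_sum (f := fun H : {H : G.Subgraph // H.Connected} =>
      (if u ∈ H.1.verts ∧ v ∉ H.1.verts then (1 : ℤ) else 0))
      (fun H _ => by positivity) (Finset.mem_univ H₀)
  zify at hf ⊢
  have hA : (2 : ℤ) ≤ 2 ^ n₁ := by
    calc (2 : ℤ) = 2 ^ 1 := by norm_num
      _ ≤ 2 ^ n₁ := pow_le_pow_right₀ (by norm_num) h₁
  have hB : (2 : ℤ) ≤ 2 ^ n₂ := by
    calc (2 : ℤ) = 2 ^ 1 := by norm_num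
      _ ≤ 2 ^ n₂ := pow_le_pow_right₀ (by norm_num) h₂
  have key : ∀ H : {H : G.Subgraph // H.Connected},
      (2 : ℤ) ^ ((if u ∈ H.1.verts then n₁ + n₂ else 0) + (if v ∈ H.1.verts then 0 else 0)) =
      2 ^ ((if u ∈ H.1.verts then n₁ else 0) + (if v ∈ H.1.verts then n₂ else 0)) +
      (2 ^ n₂ - 1) * ((if u ∈ H.1.verts then (1 : ℤ) else 0) -
        (if v ∈ H.1.verts then (1 : ℤ) else 0) +
        (2 ^ n₁ - 1) * (if u ∈ H.1.verts ∧ v ∉ H.1.verts then (1 : ℤ) else 0)) := by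
    intro H
    by_cases hu : u ∈ H.1.verts <;> by_cases hv : v ∈ H.1.verts <;> simp [hu, hv]
    ring
  rw [Finset.sum_congr rfl (fun H _ => key H), Finset.sum_add_distrib, ← Finset.mul_sum,
    Finset.sum_add_distrib, Finset.sum_sub_distrib, ← Finset.mul_sum]
  set X := ∑ H : {H : G.Subgraph // H.Connected},
      (if u ∈ H.1.verts ∧ v ∉ H.1.verts then (1 : ℤ) else 0)
  have h3 : 1 ≤ ((2 : ℤ) ^ n₁ - 1) * X := by nlinarith
  have h4 : (0 : ℤ) < (2 ^ n₂ - 1) := by linarith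
  have h5 := mul_pos h4 (lt_of_lt_of_le zero_lt_one
    (le_trans h3 (le_add_of_nonneg_left (sub_nonneg.2 hf))))
  push_cast
  linarith
end

section
/- For 3 ≤ g < n, among all unicyclic graphs on n vertices with girth g, the pineapple graph U^p_{n,g} uniquely maximizes the core index, and F(U^p_{n,g}) = n + g^2 − g + 1 + (2^{n−g} − 1)(2g + C(g−1, 2)). -/
open SimpleGraph

/-- The pineapple graph `U^p_{n,g}`: the cycle `C_g` together with `n - g` pendant
vertices all attached to the cycle vertex `0`. -/
def pineapple (n g : ℕ) : SimpleGraph (Fin g ⊕ Fin (n - g)) :=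
  SimpleGraph.fromRel (fun x y =>
    (∃ a b : Fin g, x = Sum.inl a ∧ y = Sum.inl b ∧ (cycleGraph g).Adj a b) ∨
    (∃ (a : Fin g) (i : Fin (n - g)), x = Sum.inl a ∧ (a : ℕ) = 0 ∧ y = Sum.inr i))

namespace Pine

set_option linter.unusedSectionVars false

/-- Cut characterization of connectedness of subgraphs. -/
theorem conn_iff {V : Type} {G : SimpleGraph V} (H : G.Subgraph) :
    H.Connected ↔ H.verts.Nonempty ∧ ∀ A : Set V, A ⊆ H.verts → A.Nonempty →
      (∀ x ∈ A, ∀ y, H.Adj x y → y ∈ A) → H.verts ⊆ A := by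
  constructor
  · intro h
    refine ⟨h.nonempty, fun A hA ⟨a, ha⟩ hcl b hb => ?_⟩
    obtain ⟨p⟩ := h.preconnected.coe ⟨a, hA ha⟩ ⟨b, hb⟩
    have key : ∀ (x y : H.verts) (p : H.coe.Walk x y), (x : V) ∈ A → (y : V) ∈ A := by
      intro x y p
      induction p with
      | nil => exact id
      | cons hadj p ih => exact fun hx => ih (hcl _ hx _ hadj)
    exact key _ _ p ha
  · rintro ⟨⟨a, ha⟩, h⟩
    rw [Subgraph.connected_iff', connected_iff_exists_forall_reachable]
    refine ⟨⟨a, ha⟩, fun ⟨b, hb⟩ => ?_⟩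
    have := h {x | ∃ hx : x ∈ H.verts, H.coe.Reachable ⟨a, ha⟩ ⟨x, hx⟩} (fun x hx => hx.1)
      ⟨a, ha, Reachable.refl _⟩ ?_ hb
    · exact this.2
    · rintro x ⟨hx, hr⟩ y hxy
      refine ⟨hxy.snd_mem, hr.trans ?_⟩
      apply Adj.reachable
      exact hxy

variable {V : Type} (G : SimpleGraph V)

/-- Connected subgraphs inside `S`. -/
def CA (S : Set V) : Set G.Subgraph := {H | H.Connected ∧ H.verts ⊆ S}
/-- Connected subgraphs inside `S` containing `u`. -/
def CB (S : Set V) (u : V) : Set G.Subgraph := {H | H.Connected ∧ H.verts ⊆ S ∧ u ∈ H.verts}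

variable {G}

theorem leaf_conn {S : Set V} {v w : V} (hv : v ∉ S)
    (hu : ∀ x ∈ S, G.Adj v x → x = w) (K : G.Subgraph) (hK : K.Connected)
    (hKS : K.verts ⊆ insert v S) (hvK : v ∈ K.verts) (hne : K ≠ G.singletonSubgraph v) :
    K.Adj v w ∧ (K.deleteVerts {v}).Connected := by
  have hK2 := (conn_iff K).1 hK
  have hadj : ∀ x, K.Adj v x → x = w := by
    intro x hx
    have : x ∈ insert v S := hKS hx.snd_mem
    rcases this with h | h
    · exact absurd h hx.adj_sub.ne'
    · exact hu x h hx.adj_sub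
  have hvw : K.Adj v w := by
    by_contra hcon
    apply hne
    rw [eq_singletonSubgraph_iff_verts_eq]
    apply Set.Subset.antisymm
    · apply hK2.2 {v} (by simpa using hvK) ⟨v, rfl⟩
      rintro x rfl y hy
      exact absurd (hadj y hy ▸ hy) hcon
    · simpa using hvK
  refine ⟨hvw, (conn_iff _).2 ⟨⟨w, ?_⟩, ?_⟩⟩
  · simp [hvw.snd_mem, hvw.adj_sub.ne']
  · intro A hA hAne hcl
    have hvA : v ∉ A := fun h => by simpa using hA h
    have hAK : A ⊆ K.verts := fun x hx => (hA hx).1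
    have hcl' : ∀ x ∈ A, ∀ y, K.Adj x y → y ≠ v → y ∈ A := by
      intro x hx y hxy hyv
      apply hcl x hx
      have hxv : x ≠ v := fun h => hvA (h ▸ hx)
      simp [hxy, hyv, hxv, hxy.fst_mem, hxy.snd_mem]
    by_cases hw : w ∈ A
    · have := hK2.2 (insert v A) (Set.insert_subset hvK hAK) ⟨v, Or.inl rfl⟩ (by
        rintro x (rfl | hx) y hxy
        · exact Or.inr (hadj y hxy ▸ hw)
        · by_cases hy : y = v
          · exact Or.inl hy
          · exact Or.inr (hcl' x hx y hxy hy))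
      rintro x ⟨hx, hxv⟩
      rcases this hx with h | h
      · exact absurd h hxv
      · exact h
    · have := hK2.2 A hAK hAne (by
        intro x hx y hxy
        by_cases hy : y = v
        · subst hy
          exact absurd (hadj x hxy.symm ▸ hx) hw
        · exact hcl' x hx y hxy hy)
      exact absurd (this hvK) hvA

theorem deleteVerts_sup {v w : V} (K : G.Subgraph) (hadj : K.Adj v w)
    (hu : ∀ x, K.Adj v x → x = w) :
    K.deleteVerts {v} ⊔ G.subgraphOfAdj hadj.adj_sub = K := by
  ext a b
  · simp only [Subgraph.verts_sup, Subgraph.deleteVerts_verts, subgraphOfAdj_verts]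
    constructor
    · rintro (h | rfl | rfl)
      · exact h.1
      · exact hadj.fst_mem
      · exact hadj.snd_mem
    · intro h
      by_cases hav : a = v
      · exact Or.inr (Or.inl hav)
      · exact Or.inl ⟨h, hav⟩
  · simp only [Subgraph.sup_adj, Subgraph.deleteVerts_adj, subgraphOfAdj_adj,
      Set.mem_singleton_iff, Sym2.eq_iff]
    constructor
    · rintro (h | ⟨rfl, rfl⟩ | ⟨rfl, rfl⟩)
      · exact h.2.2.2.2
      · exact hadj
      · exact hadj.symm
    · intro h
      by_cases hav : a = v
      · subst hav
        exact Or.inr (Or.inl ⟨rfl, (hu b h).symm⟩)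
      · by_cases hbv : b = v
        · subst hbv
          exact Or.inr (Or.inr ⟨rfl, (hu a h.symm).symm⟩)
        · exact Or.inl ⟨h.fst_mem, hav, h.snd_mem, hbv, h⟩

theorem sup_deleteVerts {v w : V} (H : G.Subgraph) (hadj : G.Adj v w) (hv : v ∉ H.verts)
    (hw : w ∈ H.verts) : (H ⊔ G.subgraphOfAdj hadj).deleteVerts {v} = H := by
  ext a b
  · simp only [Subgraph.verts_sup, Subgraph.deleteVerts_verts, subgraphOfAdj_verts]
    constructor
    · rintro ⟨h | rfl | rfl, h2⟩
      · exact h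
      · exact absurd rfl h2
      · exact hw
    · intro h
      exact ⟨Or.inl h, fun h2 => hv (h2 ▸ h)⟩
  · simp only [Subgraph.sup_adj, Subgraph.deleteVerts_adj, subgraphOfAdj_adj,
      Set.mem_singleton_iff, Sym2.eq_iff, Subgraph.verts_sup]
    constructor
    · rintro ⟨-, h1, -, h2, h | ⟨rfl, rfl⟩ | ⟨rfl, rfl⟩⟩
      · exact h
      · exact absurd rfl h1
      · exact absurd rfl h2
    · intro h
      exact ⟨Or.inl h.fst_mem, fun e => hv (e ▸ h.fst_mem), Or.inl h.snd_mem,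
        fun e => hv (e ▸ h.snd_mem), Or.inl h⟩

theorem sup_injOn {S : Set V} {v w : V} (hv : v ∉ S) (hadj : G.Adj v w) :
    Set.InjOn (fun H : G.Subgraph => H ⊔ G.subgraphOfAdj hadj) (CB G S w) := by
  intro H hH K hK h
  have := congrArg (fun X : G.Subgraph => X.deleteVerts {v}) h
  simp only at this
  rwa [sup_deleteVerts H hadj (fun h => hv (hH.2.1 h)) hH.2.2,
    sup_deleteVerts K hadj (fun h => hv (hK.2.1 h)) hK.2.2] at this

theorem mem_insert_iff {S : Set V} {v w : V} (hv : v ∉ S) (hw : w ∈ S) (hadj : G.Adj v w)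
    (hu : ∀ x ∈ S, G.Adj v x → x = w) (K : G.Subgraph) :
    (K ∈ CA G (insert v S) ∧ v ∈ K.verts) ↔
      K = G.singletonSubgraph v ∨
      K ∈ (fun H : G.Subgraph => H ⊔ G.subgraphOfAdj hadj) '' (CB G S w) := by
  constructor
  · rintro ⟨⟨hK, hKS⟩, hvK⟩
    by_cases hne : K = G.singletonSubgraph v
    · exact Or.inl hne
    · right
      obtain ⟨h1, h2⟩ := leaf_conn hv hu K hK hKS hvK hne
      refine ⟨K.deleteVerts {v}, ⟨h2, ?_, ?_⟩, ?_⟩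
      · rintro x ⟨hx, hxv⟩
        rcases hKS hx with h | h
        · exact absurd h hxv
        · exact h
      · exact ⟨h1.snd_mem, fun h => h1.adj_sub.ne' h⟩
      · apply deleteVerts_sup K h1
        intro x hx
        rcases hKS hx.snd_mem with h | h
        · exact absurd h hx.adj_sub.ne'
        · exact hu x h hx.adj_sub
  · rintro (rfl | ⟨H, ⟨hH, hHS, hwH⟩, rfl⟩)
    · refine ⟨⟨Subgraph.singletonSubgraph_connected, ?_⟩, ?_⟩ <;> simp
    · refine ⟨⟨?_, ?_⟩, ?_⟩
      · exact Subgraph.connected_sup hH.preconnected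
          (Subgraph.subgraphOfAdj_connected hadj).preconnected ⟨w, hwH, by simp⟩
      · rintro x (hx | rfl | rfl)
        · exact Or.inr (hHS hx)
        · exact Or.inl rfl
        · exact Or.inr hw
      · exact Or.inr (Or.inl rfl)

theorem sing_notMem {S : Set V} {v w : V} (hadj : G.Adj v w) :
    G.singletonSubgraph v ∉ (fun H : G.Subgraph => H ⊔ G.subgraphOfAdj hadj) '' (CB G S w) := by
  rintro ⟨H, -, h⟩
  have : w ∈ (G.singletonSubgraph v).verts := by
    rw [← h]; exact Or.inr (Or.inr rfl)
  exact hadj.ne' this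

section fin
variable [Finite V]

theorem ncard_CB_new {S : Set V} {v w : V} (hv : v ∉ S) (hw : w ∈ S) (hadj : G.Adj v w)
    (hu : ∀ x ∈ S, G.Adj v x → x = w) :
    (CB G (insert v S) v).ncard = (CB G S w).ncard + 1 := by
  have : CB G (insert v S) v = insert (G.singletonSubgraph v)
      ((fun H : G.Subgraph => H ⊔ G.subgraphOfAdj hadj) '' (CB G S w)) := by
    ext K
    exact and_assoc.symm.trans (mem_insert_iff hv hw hadj hu K)
  rw [this, Set.ncard_insert_of_notMem (sing_notMem hadj) (Set.toFinite _),
    Set.InjOn.ncard_image (sup_injOn hv hadj)]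

theorem ncard_CA_insert {S : Set V} {v w : V} (hv : v ∉ S) (hw : w ∈ S) (hadj : G.Adj v w)
    (hu : ∀ x ∈ S, G.Adj v x → x = w) :
    (CA G (insert v S)).ncard = (CA G S).ncard + ((CB G S w).ncard + 1) := by
  rw [← ncard_CB_new hv hw hadj hu, ← Set.ncard_union_eq]
  · congr 1
    ext K
    constructor
    · rintro ⟨h1, h2⟩
      by_cases hvK : v ∈ K.verts
      · exact Or.inr ⟨h1, h2, hvK⟩
      · refine Or.inl ⟨h1, fun x hx => ?_⟩
        rcases h2 hx with h | h
        · exact absurd (h ▸ hx) hvK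
        · exact h
    · rintro (⟨h1, h2⟩ | ⟨h1, h2, -⟩)
      · exact ⟨h1, h2.trans (Set.subset_insert _ _)⟩
      · exact ⟨h1, h2⟩
  · rw [Set.disjoint_left]
    rintro K ⟨-, h⟩ ⟨-, -, h'⟩
    exact hv (h h')

theorem ncard_CB_insert {S : Set V} {u v w : V} (hv : v ∉ S) (hw : w ∈ S) (hadj : G.Adj v w)
    (hu : ∀ x ∈ S, G.Adj v x → x = w) (huS : u ∈ S) :
    (CB G (insert v S) u).ncard = (CB G S u).ncard + (CB G S w ∩ CB G S u).ncard := by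
  rw [← Set.InjOn.ncard_image ((sup_injOn hv hadj).mono
    (Set.inter_subset_left : CB G S w ∩ CB G S u ⊆ _)), ← Set.ncard_union_eq]
  · congr 1
    ext K
    constructor
    · rintro ⟨h1, h2, h3⟩
      by_cases hvK : v ∈ K.verts
      · right
        rcases (mem_insert_iff hv hw hadj hu K).1 ⟨⟨h1, h2⟩, hvK⟩ with rfl | ⟨H, hH, rfl⟩
        · exact absurd ((show u = v from h3) ▸ huS) hv
        · refine ⟨H, ⟨hH, hH.1, hH.2.1, ?_⟩, rfl⟩
          rcases h3 with h | rfl | rfl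
          · exact h
          · exact absurd huS hv
          · exact hH.2.2
      · refine Or.inl ⟨h1, fun x hx => ?_, h3⟩
        rcases h2 hx with h | h
        · exact absurd (h ▸ hx) hvK
        · exact h
    · rintro (⟨h1, h2, h3⟩ | ⟨H, ⟨hH, hH2⟩, rfl⟩)
      · exact ⟨h1, h2.trans (Set.subset_insert _ _), h3⟩
      · have := (mem_insert_iff hv hw hadj hu _).2 (Or.inr ⟨H, hH, rfl⟩)
        exact ⟨this.1.1, this.1.2, Or.inl hH2.2.2⟩
  · rw [Set.disjoint_left]
    rintro K ⟨-, h, -⟩ ⟨H, -, rfl⟩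
    exact hv (h (Or.inr (Or.inl rfl)))

/-- Sets obtained from the cycle by adding leaves. -/
inductive Built (G : SimpleGraph V) {ι : Type} (φ : ι → V) : ℕ → Set V → Prop
  | base : Built G φ 0 (Set.range φ)
  | step {k : ℕ} {S : Set V} {v w : V} : Built G φ k S → v ∉ S → w ∈ S →
      (∀ x ∈ S, G.Adj v x ↔ x = w) → Built G φ (k + 1) (insert v S)

/-- All vertices of `S` off the cycle are leaves at `u`. -/
def IsPine (G : SimpleGraph V) {ι : Type} (φ : ι → V) (S : Set V) (u : V) : Prop :=
  u ∈ Set.range φ ∧ ∀ x ∈ S, x ∉ Set.range φ → ∀ y ∈ S, G.Adj x y ↔ y = u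

variable {ι : Type} {φ : ι → V}

theorem Built.sub {k : ℕ} {S : Set V} (h : Built G φ k S) : Set.range φ ⊆ S := by
  induction h with
  | base => exact subset_rfl
  | step _ _ _ _ ih => exact ih.trans (Set.subset_insert _ _)

theorem Built.card {k : ℕ} {S : Set V} (h : Built G φ k S) :
    S.ncard = (Set.range φ).ncard + k := by
  induction h with
  | base => rfl
  | step _ hv _ _ ih => rw [Set.ncard_insert_of_notMem hv (Set.toFinite _), ih]; ring

theorem isPine_insert {k : ℕ} {S : Set V} (h : Built G φ k S) {u v w : V} (hv : v ∉ S)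
    (hw : w ∈ S) (hu : ∀ x ∈ S, G.Adj v x ↔ x = w) :
    IsPine G φ (insert v S) u ↔ (u = w ∧ IsPine G φ S u) := by
  have hvr : v ∉ Set.range φ := fun hh => hv (h.sub hh)
  constructor
  · rintro ⟨h1, h2⟩
    refine ⟨?_, h1, fun x hx hxr y hy => h2 x (Or.inr hx) hxr y (Or.inr hy)⟩
    exact ((h2 v (Or.inl rfl) hvr w (Or.inr hw)).1 ((hu w hw).2 rfl)).symm
  · rintro ⟨rfl, h1, h2⟩
    refine ⟨h1, ?_⟩
    have hvu : v ≠ u := fun e => hv (e ▸ hw)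
    rintro x (rfl | hx) hxr y (rfl | hy)
    · simp [hvu]
    · exact hu y hy
    · refine ⟨fun hxy => ?_, fun e => absurd e hvu⟩
      have := (hu x hx).1 hxy.symm
      exact absurd (this ▸ h1) hxr
    · exact h2 x hx hxr y hy

theorem CB_main {c : ℕ} (hc : 2 ≤ c)
    (hbase : ∀ u ∈ Set.range φ, (CB G (Set.range φ) u).ncard = c)
    {k : ℕ} {S : Set V} (h : Built G φ k S) : ∀ u ∈ S, (CB G S u).ncard ≤ 2 ^ k * c ∧
      ((CB G S u).ncard = 2 ^ k * c ↔ IsPine G φ S u) := by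
  induction h with
  | base =>
    intro u hu
    refine ⟨by simp [hbase u hu], by simp only [hbase u hu, pow_zero, one_mul, true_iff]; exact ⟨hu, fun x hx hx' => absurd hx hx'⟩⟩
  | @step k S v w hb hv hw hu ih =>
    have hadj : G.Adj v w := (hu w hw).2 rfl
    have hu' : ∀ x ∈ S, G.Adj v x → x = w := fun x hx => (hu x hx).1
    have hpos : 1 ≤ 2 ^ k := Nat.one_le_two_pow
    intro u huS
    rw [isPine_insert hb hv hw hu]
    rcases huS with rfl | huS
    · rw [ncard_CB_new hv hw hadj hu']
      have := (ih w hw).1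
      have h3 : (CB G S w).ncard + 1 < 2 ^ (k + 1) * c := by rw [pow_succ]; nlinarith
      refine ⟨h3.le, ⟨fun h => absurd h h3.ne, ?_⟩⟩
      rintro ⟨rfl, -⟩
      exact absurd hw hv
    · rw [ncard_CB_insert hv hw hadj hu' huS]
      obtain ⟨i1, i2⟩ := ih u huS
      by_cases hwu : u = w
      · subst hwu
        rw [Set.inter_self, pow_succ]
        refine ⟨by nlinarith, ?_⟩
        simp only [true_and]
        rw [← i2]
        constructor <;> intro h <;> nlinarith
      · have : (CB G S w ∩ CB G S u).ncard < (CB G S u).ncard := by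
          apply Set.ncard_lt_ncard _ (Set.toFinite _)
          refine ⟨Set.inter_subset_right, fun h => ?_⟩
          have h1 : G.singletonSubgraph u ∈ CB G S u :=
            ⟨Subgraph.singletonSubgraph_connected, by simpa using huS, by simp⟩
          have := (h h1).1.2.2
          simp at this
          exact hwu this.symm
        have h3 : (CB G S u).ncard + (CB G S w ∩ CB G S u).ncard < 2 ^ (k + 1) * c := by
          rw [pow_succ]; nlinarith
        exact ⟨h3.le, fun h => absurd h h3.ne, fun h => absurd h.1 hwu⟩

theorem CA_main {c d : ℕ} (hc : 2 ≤ c) (hι : Nonempty ι)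
    (hbase : ∀ u ∈ Set.range φ, (CB G (Set.range φ) u).ncard = c)
    (hbaseA : (CA G (Set.range φ)).ncard = d)
    {k : ℕ} {S : Set V} (h : Built G φ k S) : (CA G S).ncard ≤ d + k + (2 ^ k - 1) * c ∧
      ((CA G S).ncard = d + k + (2 ^ k - 1) * c ↔ ∃ u, IsPine G φ S u) := by
  induction h with
  | base =>
    refine ⟨by simp [hbaseA], by
      simp only [hbaseA, pow_zero, Nat.sub_self, zero_mul, add_zero, true_iff]
      obtain ⟨i⟩ := hι
      exact ⟨φ i, ⟨i, rfl⟩, fun x hx hx' => absurd hx hx'⟩⟩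
  | @step k S v w hb hv hw hu ih =>
    have hadj : G.Adj v w := (hu w hw).2 rfl
    have hu' : ∀ x ∈ S, G.Adj v x → x = w := fun x hx => (hu x hx).1
    have hpos : 1 ≤ 2 ^ k := Nat.one_le_two_pow
    obtain ⟨m, hm⟩ : ∃ m, 2 ^ k = m + 1 := ⟨2 ^ k - 1, by omega⟩
    have hB := CB_main hc hbase hb w hw
    rw [ncard_CA_insert hv hw hadj hu']
    have e : d + (k + 1) + (2 ^ (k + 1) - 1) * c =
        (d + k + (2 ^ k - 1) * c) + (2 ^ k * c + 1) := by
      rw [pow_succ, hm, show (m + 1) * 2 - 1 = 2 * m + 1 by omega, show m + 1 - 1 = m by omega]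
      ring
    rw [e]
    refine ⟨by omega, ?_⟩
    simp only [isPine_insert hb hv hw hu]
    constructor
    · intro h
      exact ⟨w, rfl, hB.2.1 (by omega)⟩
    · rintro ⟨u, rfl, h⟩
      have h1 := hB.2.2 h
      have h2 := ih.2.2 ⟨_, h⟩
      omega

end fin
section cyc
variable {g : ℕ} {φ : ZMod g → V}

/-- The arc of length `k` starting at `i`. -/
def arc (hs : ∀ a, G.Adj (φ a) (φ (a + 1))) (i : ZMod g) : ℕ → G.Subgraph
  | 0 => G.singletonSubgraph (φ i)
  | k + 1 => arc hs i k ⊔ G.subgraphOfAdj (hs (i + k))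

theorem arc_verts (hs : ∀ a, G.Adj (φ a) (φ (a + 1))) (i : ZMod g) (k : ℕ) (y : V) :
    y ∈ (arc hs i k).verts ↔ ∃ j : ℕ, j ≤ k ∧ y = φ (i + j) := by
  induction k with
  | zero => simp [arc]
  | succ k ih =>
    simp only [arc, Subgraph.verts_sup, Set.mem_union, ih, subgraphOfAdj_verts,
      Set.mem_insert_iff, Set.mem_singleton_iff]
    constructor
    · rintro (⟨j, h, rfl⟩ | rfl | rfl)
      · exact ⟨j, by omega, rfl⟩
      · exact ⟨k, by omega, rfl⟩
      · exact ⟨k + 1, le_rfl, by push_cast; rw [add_assoc]⟩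
    · rintro ⟨j, h, rfl⟩
      rcases Nat.lt_or_ge j (k + 1) with h1 | h1
      · exact Or.inl ⟨j, by omega, rfl⟩
      · obtain rfl : j = k + 1 := by omega
        right; right; push_cast; rw [add_assoc]

theorem arc_adj (hs : ∀ a, G.Adj (φ a) (φ (a + 1))) (i : ZMod g) (k : ℕ) (a b : V) :
    (arc hs i k).Adj a b ↔ ∃ j : ℕ, j < k ∧ s(φ (i + j), φ (i + j + 1)) = s(a, b) := by
  induction k with
  | zero => simp [arc]
  | succ k ih =>
    simp only [arc, Subgraph.sup_adj, ih, subgraphOfAdj_adj]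
    constructor
    · rintro (⟨j, h, e⟩ | e)
      · exact ⟨j, by omega, e⟩
      · exact ⟨k, by omega, e⟩
    · rintro ⟨j, h, e⟩
      rcases Nat.lt_or_ge j k with h1 | h1
      · exact Or.inl ⟨j, h1, e⟩
      · obtain rfl : j = k := by omega
        exact Or.inr e

theorem arc_conn (hs : ∀ a, G.Adj (φ a) (φ (a + 1))) (i : ZMod g) (k : ℕ) :
    (arc hs i k).Connected := by
  induction k with
  | zero => exact Subgraph.singletonSubgraph_connected
  | succ k ih =>
    refine Subgraph.connected_sup ih.preconnected
      (Subgraph.subgraphOfAdj_connected _).preconnected ⟨φ (i + k), ?_, by simp⟩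
    exact (arc_verts hs i k _).2 ⟨k, le_rfl, rfl⟩

theorem arc_mem (hs : ∀ a, G.Adj (φ a) (φ (a + 1))) (i : ZMod g) (k : ℕ) :
    arc hs i k ∈ CA G (Set.range φ) := by
  refine ⟨arc_conn hs i k, fun y hy => ?_⟩
  obtain ⟨j, -, rfl⟩ := (arc_verts hs i k y).1 hy
  exact ⟨_, rfl⟩

theorem natCast_inj {g a b : ℕ} (ha : a < g) (hb : b < g) (h : (a : ZMod g) = b) : a = b := by
  have := (ZMod.natCast_eq_natCast_iff' a b g).1 h
  rwa [Nat.mod_eq_of_lt ha, Nat.mod_eq_of_lt hb] at this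

theorem arc_start (hg : 3 ≤ g) (hφ : Function.Injective φ)
    (hs : ∀ a, G.Adj (φ a) (φ (a + 1))) (i : ZMod g) (k : ℕ) (hk : k < g) :
    ¬ (arc hs i k).Adj (φ (i - 1)) (φ i) := by
  rw [arc_adj]
  rintro ⟨j, hj, e⟩
  rw [Sym2.eq_iff] at e
  rcases e with ⟨e1, e2⟩ | ⟨e1, e2⟩
  · have h1 := hφ e2
    have : ((j + 1 : ℕ) : ZMod g) = (0 : ℕ) := by
      push_cast; linear_combination h1
    have := natCast_inj (by omega) (by omega) this
    omega
  · have h1 := hφ e1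
    have h2 := hφ e2
    have : ((2 : ℕ) : ZMod g) = (0 : ℕ) := by
      push_cast; linear_combination h2 - h1
    have := natCast_inj (by omega) (by omega) this
    omega

theorem arc_inj (hg : 3 ≤ g) (hφ : Function.Injective φ)
    (hs : ∀ a, G.Adj (φ a) (φ (a + 1))) {i i' : ZMod g} {k k' : ℕ} (hk : k < g) (hk' : k' < g)
    (h : arc hs i k = arc hs i' k') : i = i' ∧ k = k' := by
  have hi : i = i' := by
    have h1 : φ i ∈ (arc hs i' k').verts := by
      rw [← h, arc_verts]; exact ⟨0, by omega, by simp⟩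
    obtain ⟨j, hj, e⟩ := (arc_verts hs i' k' _).1 h1
    have e := hφ e
    rcases j with _ | j
    · simpa using e
    · exfalso
      apply arc_start hg hφ hs i k hk
      rw [h, arc_adj]
      refine ⟨j, by omega, ?_⟩
      push_cast at e
      have e1 : i - 1 = i' + j := by linear_combination e
      have e2 : i = i' + j + 1 := by linear_combination e
      rw [e1, ← e2]
  subst hi
  refine ⟨rfl, ?_⟩
  have key : ∀ k k', k < g → k' < g → arc hs i k = arc hs i k' → k' ≤ k := by
    intro k k' hk hk' h
    have h1 : φ (i + k') ∈ (arc hs i k).verts := by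
      rw [h, arc_verts]; exact ⟨k', le_rfl, rfl⟩
    obtain ⟨j, hj, e⟩ := (arc_verts hs i k _).1 h1
    have := natCast_inj hk' (by omega) (add_left_cancel (hφ e))
    omega
  exact le_antisymm (key _ _ hk' hk h.symm) (key _ _ hk hk' h)

theorem full_adj (hg : 3 ≤ g) (hs : ∀ a, G.Adj (φ a) (φ (a + 1))) (i : ZMod g) :
    (arc hs 0 g).Adj (φ i) (φ (i + 1)) := by
  have : NeZero g := ⟨by omega⟩
  rw [arc_adj]
  exact ⟨i.val, ZMod.val_lt i, by simp⟩

theorem full_ne (hg : 3 ≤ g) (hφ : Function.Injective φ)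
    (hs : ∀ a, G.Adj (φ a) (φ (a + 1))) (i : ZMod g) (k : ℕ) (hk : k < g) :
    arc hs i k ≠ arc hs 0 g := by
  intro h
  apply arc_start hg hφ hs i k hk
  rw [h]
  have := full_adj hg hs (i - 1)
  simpa using this

theorem arc_surj (hg : 3 ≤ g) (hφ : Function.Injective φ)
    (hadj : ∀ a b, G.Adj (φ a) (φ b) ↔ b = a + 1 ∨ a = b + 1)
    (hs : ∀ a, G.Adj (φ a) (φ (a + 1))) (H : G.Subgraph) (hH : H ∈ CA G (Set.range φ)) :
    H = arc hs 0 g ∨ ∃ (i : ZMod g) (k : ℕ), k < g ∧ H = arc hs i k := by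
  have : NeZero g := ⟨by omega⟩
  obtain ⟨hc, hr⟩ := hH
  by_cases hall : ∀ x, φ x ∈ H.verts → H.Adj (φ (x - 1)) (φ x)
  · left
    obtain ⟨v, hv⟩ := hc.nonempty
    obtain ⟨x, rfl⟩ := hr hv
    have h1 : ∀ j : ℕ, φ (x - j) ∈ H.verts := by
      intro j
      induction j with
      | zero => simpa using hv
      | succ j ih =>
        have := (hall _ ih).fst_mem
        rwa [show x - j - 1 = x - ((j + 1 : ℕ) : ZMod g) by push_cast; ring] at this
    have h2 : ∀ y, φ y ∈ H.verts := by
      intro y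
      have := h1 (x - y).val
      simpa using this
    have h3 : ∀ y, H.Adj (φ y) (φ (y + 1)) := by
      intro y
      have := hall _ (h2 (y + 1))
      simpa using this
    ext a b
    · constructor
      · intro ha
        obtain ⟨x, rfl⟩ := hr ha
        exact (full_adj hg hs x).fst_mem
      · intro ha
        obtain ⟨j, -, rfl⟩ := (arc_verts hs 0 g a).1 ha
        exact h2 _
    · constructor
      · intro hab
        obtain ⟨x, rfl⟩ := hr hab.fst_mem
        obtain ⟨y, rfl⟩ := hr hab.snd_mem
        rcases (hadj _ _).1 hab.adj_sub with rfl | rfl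
        · exact full_adj hg hs x
        · exact (full_adj hg hs y).symm
      · intro hab
        obtain ⟨j, -, e⟩ := (arc_adj hs 0 g a b).1 hab
        rcases Sym2.eq_iff.1 e with ⟨rfl, rfl⟩ | ⟨rfl, rfl⟩
        · exact h3 _
        · exact (h3 _).symm
  · right
    push Not at hall
    obtain ⟨i, hi, hni⟩ := hall
    have hex : ∃ k : ℕ, ¬ H.Adj (φ (i + k)) (φ (i + k + 1)) := by
      refine ⟨g - 1, ?_⟩
      rw [Nat.cast_sub (by omega)]
      simpa [← sub_eq_add_neg] using hni
    classical
    set k := Nat.find hex with hkdef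
    have hk1 : ¬ H.Adj (φ (i + k)) (φ (i + k + 1)) := Nat.find_spec hex
    have hk2 : ∀ j, j < k → H.Adj (φ (i + j)) (φ (i + j + 1)) := fun j hj =>
      not_not.1 (Nat.find_min hex hj)
    have hk3 : k ≤ g - 1 := Nat.find_min' hex (by
      rw [Nat.cast_sub (by omega)]
      simpa [← sub_eq_add_neg] using hni)
    have hsub : (arc hs i k).verts ⊆ H.verts := by
      intro y hy
      obtain ⟨j, hj, rfl⟩ := (arc_verts hs i k y).1 hy
      rcases j with _ | j
      · simpa using hi
      · have := (hk2 j (by omega)).snd_mem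
        rwa [show i + j + 1 = i + ((j + 1 : ℕ) : ZMod g) by push_cast; ring] at this
    have hsub2 : H.verts ⊆ (arc hs i k).verts := by
      apply ((conn_iff H).1 hc).2 _ hsub (arc_conn hs i k).nonempty
      intro x hx y hxy
      obtain ⟨j, hj, rfl⟩ := (arc_verts hs i k x).1 hx
      obtain ⟨z, rfl⟩ := hr hxy.snd_mem
      rw [arc_verts]
      rcases (hadj _ _).1 hxy.adj_sub with rfl | e
      · have : j ≠ k := by rintro rfl; exact hk1 hxy
        exact ⟨j + 1, by omega, by push_cast; rw [add_assoc]⟩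
      · rcases j with _ | j
        · exfalso
          apply hni
          have hz : z = i - 1 := by
            push_cast at e; linear_combination -e
          rw [← hz]
          simpa using hxy.symm
        · refine ⟨j, by omega, ?_⟩
          congr 1
          push_cast at e; linear_combination -e
    have hst : ∀ x, H.Adj (φ x) (φ (x + 1)) → (arc hs i k).Adj (φ x) (φ (x + 1)) := by
      intro x hx
      obtain ⟨j, hj, e⟩ := (arc_verts hs i k _).1 (hsub2 hx.fst_mem)
      have e := hφ e
      subst e
      have : j ≠ k := by rintro rfl; exact hk1 hx
      rw [arc_adj]
      exact ⟨j, by omega, rfl⟩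
    refine ⟨i, k, by omega, ?_⟩
    ext a b
    · exact ⟨fun h => hsub2 h, fun h => hsub h⟩
    · constructor
      · intro hab
        obtain ⟨x, rfl⟩ := hr hab.fst_mem
        obtain ⟨y, rfl⟩ := hr hab.snd_mem
        rcases (hadj _ _).1 hab.adj_sub with rfl | rfl
        · exact hst x hab
        · exact (hst y hab.symm).symm
      · intro hab
        obtain ⟨j, hj, e⟩ := (arc_adj hs i k a b).1 hab
        rcases Sym2.eq_iff.1 e with ⟨rfl, rfl⟩ | ⟨rfl, rfl⟩
        · exact hk2 j hj
        · exact (hk2 j hj).symm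

theorem cycle_CA [Finite V] (hg : 3 ≤ g) (hφ : Function.Injective φ)
    (hadj : ∀ a b, G.Adj (φ a) (φ b) ↔ b = a + 1 ∨ a = b + 1) :
    (CA G (Set.range φ)).ncard = g ^ 2 + 1 := by
  have : NeZero g := ⟨by omega⟩
  have hs : ∀ a, G.Adj (φ a) (φ (a + 1)) := fun a => (hadj _ _).2 (Or.inl rfl)
  have : CA G (Set.range φ) = insert (arc hs 0 g)
      (Set.range (fun p : ZMod g × Fin g => arc hs p.1 p.2)) := by
    ext H
    constructor
    · intro h
      rcases arc_surj hg hφ hadj hs H h with h | ⟨i, k, hk, h⟩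
      · exact Or.inl h
      · exact Or.inr ⟨(i, ⟨k, hk⟩), h.symm⟩
    · rintro (rfl | ⟨p, rfl⟩)
      · exact arc_mem _ _ _
      · exact arc_mem _ _ _
  rw [this, Set.ncard_insert_of_notMem _ (Set.toFinite _), ← Set.image_univ,
    Set.ncard_image_of_injective, Set.ncard_univ]
  · simp [sq]
  · rintro ⟨i, k⟩ ⟨i', k'⟩ h
    obtain ⟨h1, h2⟩ := arc_inj hg hφ hs k.2 k'.2 h
    exact Prod.ext h1 (Fin.ext h2)
  · rintro ⟨p, h⟩
    exact full_ne hg hφ hs _ _ p.2.2 h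

theorem sum_formula (m : ℕ) :
    ∑ k ∈ Finset.range (m + 1), (k + 1) + 1 = 2 * (m + 1) + m.choose 2 := by
  induction m with
  | zero => simp
  | succ m ih =>
    rw [Finset.sum_range_succ, Nat.choose_succ_succ' m 1, Nat.choose_one_right]
    norm_num
    omega

theorem cycle_CB [Finite V] (hg : 3 ≤ g) (hφ : Function.Injective φ)
    (hadj : ∀ a b, G.Adj (φ a) (φ b) ↔ b = a + 1 ∨ a = b + 1) :
    ∀ u ∈ Set.range φ, (CB G (Set.range φ) u).ncard = 2 * g + (g - 1).choose 2 := by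
  have : NeZero g := ⟨by omega⟩
  have hs : ∀ a, G.Adj (φ a) (φ (a + 1)) := fun a => (hadj _ _).2 (Or.inl rfl)
  rintro _ ⟨x, rfl⟩
  let T : Finset (Σ _ : ℕ, ℕ) := (Finset.range g).sigma (fun k => Finset.range (k + 1))
  have : CB G (Set.range φ) (φ x) = insert (arc hs 0 g)
      ((fun p : (Σ _ : ℕ, ℕ) => arc hs (x - p.2) p.1) '' (T : Set (Σ _ : ℕ, ℕ))) := by
    ext H
    constructor
    · rintro ⟨h1, h2, h3⟩
      rcases arc_surj hg hφ hadj hs H ⟨h1, h2⟩ with h | ⟨i, k, hk, rfl⟩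
      · exact Or.inl h
      · obtain ⟨j, hj, e⟩ := (arc_verts hs i k _).1 h3
        have e := hφ e
        refine Or.inr ⟨⟨k, j⟩, ?_, ?_⟩
        · simp [T, hk]; omega
        · simp [e]
    · rintro (rfl | ⟨⟨k, j⟩, hp, rfl⟩)
      · exact ⟨(arc_mem hs _ _).1, (arc_mem hs _ _).2, (full_adj hg hs x).fst_mem⟩
      · refine ⟨(arc_mem hs _ _).1, (arc_mem hs _ _).2, ?_⟩
        rw [arc_verts]
        simp [T] at hp
        exact ⟨j, by simp; omega, by simp⟩
  rw [this, Set.ncard_insert_of_notMem _ (Set.toFinite _), Set.InjOn.ncard_image,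
    Set.ncard_coe_finset]
  · simp only [T, Finset.card_sigma, Finset.card_range]
    obtain ⟨m, rfl⟩ : ∃ m, g = m + 1 := ⟨g - 1, by omega⟩
    simpa using sum_formula m
  · rintro ⟨k, j⟩ hp ⟨k', j'⟩ hp' h
    simp [T] at hp hp'
    obtain ⟨h1, h2⟩ := arc_inj hg hφ hs hp.1 hp'.1 h
    have h3 : j = j' :=
      natCast_inj (g := g) (by omega) (by omega) (sub_right_injective h1)
    change k = k' at h2
    subst h2 h3
    rfl
  · rintro ⟨⟨k, j⟩, hp, h⟩
    simp [T] at hp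
    exact full_ne hg hφ hs _ _ hp.1 h

end cyc
section exist

/-- Edges inside `S`. -/
def ES (G : SimpleGraph V) (S : Set V) : Set (Sym2 V) := {e | e ∈ G.edgeSet ∧ ∀ x ∈ e, x ∈ S}

theorem exists_cut (hG : G.Connected) {S : Set V} (hS : S.Nonempty) (hS2 : S ≠ Set.univ) :
    ∃ v w, v ∉ S ∧ w ∈ S ∧ G.Adj v w := by
  obtain ⟨a, ha⟩ := hS
  obtain ⟨b, hb⟩ := (Set.ne_univ_iff_exists_notMem S).1 hS2
  obtain ⟨p⟩ := hG.preconnected a b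
  obtain ⟨d, -, h1, h2⟩ := p.exists_boundary_dart S ha hb
  exact ⟨d.snd, d.fst, h2, h1, d.adj.symm⟩

variable [Finite V]

theorem ES_insert {S : Set V} {v w : V} (hv : v ∉ S) (hw : w ∈ S) (hadj : G.Adj v w) :
    (ES G S).ncard + 1 ≤ (ES G (insert v S)).ncard := by
  rw [← Set.ncard_insert_of_notMem (a := s(v, w)) _ (Set.toFinite _)]
  · apply Set.ncard_le_ncard _ (Set.toFinite _)
    rintro e (rfl | ⟨h1, h2⟩)
    · refine ⟨hadj, fun x hx => ?_⟩
      rcases Sym2.mem_iff.1 hx with rfl | rfl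
      · exact Or.inl rfl
      · exact Or.inr hw
    · exact ⟨h1, fun x hx => Or.inr (h2 x hx)⟩
  · exact fun h => hv (h.2 v (Sym2.mem_mk_left _ _))

theorem ES_insert2 {S : Set V} {v w x : V} (hv : v ∉ S) (hw : w ∈ S) (hadj : G.Adj v w)
    (hx : x ∈ S) (hadjx : G.Adj v x) (hne : x ≠ w) :
    (ES G S).ncard + 2 ≤ (ES G (insert v S)).ncard := by
  have h1 : s(v, w) ∉ ES G S := fun h => hv (h.2 v (Sym2.mem_mk_left _ _))
  have h2 : s(v, x) ∉ insert s(v, w) (ES G S) := by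
    rintro (h | h)
    · rcases Sym2.eq_iff.1 h with ⟨-, h⟩ | ⟨h, -⟩
      · exact hne h
      · exact hv (h ▸ hw)
    · exact hv (h.2 v (Sym2.mem_mk_left _ _))
  rw [show (ES G S).ncard + 2 = (ES G S).ncard + 1 + 1 from rfl,
    ← Set.ncard_insert_of_notMem h1 (Set.toFinite _),
    ← Set.ncard_insert_of_notMem h2 (Set.toFinite _)]
  apply Set.ncard_le_ncard _ (Set.toFinite _)
  rintro e (rfl | rfl | ⟨h1, h2⟩)
  · refine ⟨hadjx, fun y hy => ?_⟩
    rcases Sym2.mem_iff.1 hy with rfl | rfl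
    · exact Or.inl rfl
    · exact Or.inr hx
  · refine ⟨hadj, fun y hy => ?_⟩
    rcases Sym2.mem_iff.1 hy with rfl | rfl
    · exact Or.inl rfl
    · exact Or.inr hw
  · exact ⟨h1, fun x hx => Or.inr (h2 x hx)⟩

theorem compl_insert_card {S : Set V} {v : V} (hv : v ∉ S) {m : ℕ} (h : Sᶜ.ncard = m + 1) :
    (insert v S)ᶜ.ncard = m := by
  have h1 := Set.ncard_add_ncard_compl S
  have h2 := Set.ncard_add_ncard_compl (insert v S)
  rw [Set.ncard_insert_of_notMem hv (Set.toFinite _)] at h2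
  omega

theorem ne_univ_of_card {S : Set V} {m : ℕ} (h : Sᶜ.ncard = m + 1) : S ≠ Set.univ := by
  rintro rfl
  simp at h

theorem eq_univ_of_card {S : Set V} (h : Sᶜ.ncard = 0) : S = Set.univ := by
  rw [Set.ncard_eq_zero (Set.toFinite _)] at h
  simpa using h

theorem grow (hG : G.Connected) (m : ℕ) : ∀ S : Set V, S.Nonempty → Sᶜ.ncard = m →
    (ES G S).ncard + m ≤ G.edgeSet.ncard := by
  induction m with
  | zero =>
    intro S _ _
    exact Set.ncard_le_ncard (fun e he => he.1) (Set.toFinite _)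
  | succ m ih =>
    intro S hS hm
    obtain ⟨v, w, hv, hw, hadj⟩ := exists_cut hG hS (ne_univ_of_card hm)
    have h1 := ih (insert v S) ⟨v, Or.inl rfl⟩ (compl_insert_card hv hm)
    have h2 := ES_insert hv hw hadj
    omega

theorem build {ι : Type} {φ : ι → V} [Nonempty ι] (hG : G.Connected)
    (hE : G.edgeSet.ncard = Nat.card V) (m : ℕ) :
    ∀ (k : ℕ) (S : Set V), Sᶜ.ncard = m → Built G φ k S → S.ncard ≤ (ES G S).ncard →
      Built G φ (k + m) Set.univ := by
  induction m with
  | zero =>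
    intro k S h hb _
    rw [← eq_univ_of_card h]
    exact hb
  | succ m ih =>
    intro k S hm hb hS
    have hne : S.Nonempty := ⟨_, hb.sub ⟨Classical.arbitrary ι, rfl⟩⟩
    obtain ⟨v, w, hv, hw, hadj⟩ := exists_cut hG hne (ne_univ_of_card hm)
    have hm' := compl_insert_card hv hm
    have hgr := grow hG m (insert v S) ⟨v, Or.inl rfl⟩ hm'
    have hcard := Set.ncard_add_ncard_compl S
    have hins := ES_insert hv hw hadj
    rw [show k + (m + 1) = (k + 1) + m by ring]
    refine ih (k + 1) (insert v S) hm' (Built.step hb hv hw ?_) ?_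
    · intro x hx
      refine ⟨fun hvx => ?_, fun e => e ▸ hadj⟩
      by_contra hne
      have := ES_insert2 hv hw hadj hx hvx hne
      omega
    · rw [Set.ncard_insert_of_notMem hv (Set.toFinite _)]
      omega

theorem edge_inj {g : ℕ} {φ : ZMod g → V} (hg : 3 ≤ g) (hφ : Function.Injective φ) :
    Function.Injective (fun a => s(φ a, φ (a + 1))) := by
  intro a b h
  rcases Sym2.eq_iff.1 h with ⟨h1, -⟩ | ⟨h1, h2⟩
  · exact hφ h1
  · have h1 := hφ h1
    have h2 := hφ h2
    have : ((2 : ℕ) : ZMod g) = (0 : ℕ) := by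
      push_cast; linear_combination h2 - h1
    have := natCast_inj (by omega) (by omega) this
    omega

theorem cycle_base {g : ℕ} {φ : ZMod g → V} (hg : 3 ≤ g) (hφ : Function.Injective φ)
    (hs : ∀ a, G.Adj (φ a) (φ (a + 1))) (hG : G.Connected)
    (hE : G.edgeSet.ncard = Nat.card V) :
    (∀ a b, G.Adj (φ a) (φ b) ↔ b = a + 1 ∨ a = b + 1) ∧
      (Set.range φ).ncard = g ∧ g ≤ (ES G (Set.range φ)).ncard := by
  have : NeZero g := ⟨by omega⟩
  have hc1 : (Set.range φ).ncard = g := by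
    rw [← Set.image_univ, Set.ncard_image_of_injective _ hφ, Set.ncard_univ]; simp
  have hc2 : (Set.range (fun a => s(φ a, φ (a + 1)))).ncard = g := by
    rw [← Set.image_univ, Set.ncard_image_of_injective _ (edge_inj hg hφ), Set.ncard_univ]; simp
  have hsub : Set.range (fun a => s(φ a, φ (a + 1))) ⊆ ES G (Set.range φ) := by
    rintro _ ⟨a, rfl⟩
    refine ⟨hs a, fun x hx => ?_⟩
    rcases Sym2.mem_iff.1 hx with rfl | rfl <;> exact ⟨_, rfl⟩
  refine ⟨fun a b => ⟨fun hab => ?_, ?_⟩, hc1, ?_⟩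
  · by_contra hcon
    push Not at hcon
    have hnot : s(φ a, φ b) ∉ Set.range (fun a => s(φ a, φ (a + 1))) := by
      rintro ⟨c, h⟩
      rcases Sym2.eq_iff.1 h with ⟨h1, h2⟩ | ⟨h1, h2⟩
      · exact hcon.1 (by rw [← hφ h2, hφ h1])
      · exact hcon.2 (by rw [← hφ h2, hφ h1])
    have h1 : (insert s(φ a, φ b) (Set.range (fun a => s(φ a, φ (a + 1))))).ncard ≤
        (ES G (Set.range φ)).ncard := by
      apply Set.ncard_le_ncard _ (Set.toFinite _)
      apply Set.insert_subset _ hsub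
      refine ⟨hab, fun x hx => ?_⟩
      rcases Sym2.mem_iff.1 hx with rfl | rfl <;> exact ⟨_, rfl⟩
    rw [Set.ncard_insert_of_notMem hnot (Set.toFinite _), hc2] at h1
    have h2 := grow hG _ (Set.range φ) ⟨φ 0, 0, rfl⟩ rfl
    have h3 := Set.ncard_add_ncard_compl (Set.range φ)
    omega
  · rintro (rfl | rfl)
    · exact hs a
    · exact (hs b).symm
  · exact hc2.symm.le.trans (Set.ncard_le_ncard hsub (Set.toFinite _))

theorem exists_cycle {g : ℕ} (hg : 3 ≤ g) (hG : G.girth = g) :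
    ∃ φ : ZMod g → V, Function.Injective φ ∧ ∀ a, G.Adj (φ a) (φ (a + 1)) := by
  have : NeZero g := ⟨by omega⟩
  have hac : ¬ G.IsAcyclic := fun h => by
    rw [← girth_eq_zero] at h; omega
  obtain ⟨a, w, hw, hl⟩ := exists_girth_eq_length.2 hac
  rw [hG] at hl
  refine ⟨fun i => w.getVert i.val, ?_, ?_⟩
  · intro i j h
    have hi := ZMod.val_lt i
    have hj := ZMod.val_lt j
    exact ZMod.val_injective g (hw.getVert_injOn' (by simp; omega) (by simp; omega) h)
  · intro i
    have hi := ZMod.val_lt i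
    have hadj := w.adj_getVert_succ (i := i.val) (by omega)
    have hone : (1 : ZMod g).val = 1 := by
      have : Fact (1 < g) := ⟨by omega⟩
      exact ZMod.val_one g
    have hv := ZMod.val_add i 1
    rw [hone] at hv
    simp only [hv]
    rcases Nat.lt_or_ge (i.val + 1) g with h | h
    · rwa [Nat.mod_eq_of_lt h]
    · have e : i.val + 1 = g := by omega
      rw [e, Nat.mod_self, Walk.getVert_zero]
      have e2 : w.getVert (i.val + 1) = a := by
        rw [show i.val + 1 = w.length by omega, Walk.getVert_length]
      rwa [e2] at hadj

end exist

theorem coreIndex_eq (G : SimpleGraph V) : coreIndex G = (CA G Set.univ).ncard := by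
  rw [coreIndex, CA]
  simp only [Set.subset_univ, and_true]
  rfl

theorem coreIndex_le {W : Type} [Finite W] {G : SimpleGraph V} {G' : SimpleGraph W}
    (f : G ≃g G') : coreIndex G ≤ coreIndex G' := by
  have hinj : Function.Injective (f : V → W) := f.injective
  refine Nat.card_le_card_of_injective
    (fun H : {H : G.Subgraph // H.Connected} =>
      (⟨H.1.map f.toHom, ?_⟩ : {H : G'.Subgraph // H.Connected})) ?_
  · obtain ⟨H, hH⟩ := H
    rw [conn_iff] at hH ⊢
    obtain ⟨⟨a, ha⟩, h⟩ := hH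
    refine ⟨⟨f a, a, ha, rfl⟩, ?_⟩
    intro A hA hne hcl
    have := h (f ⁻¹' A) ?_ ?_ ?_
    · rintro _ ⟨x, hx, rfl⟩
      exact this hx
    · intro x hx
      obtain ⟨y, hy, e⟩ := hA hx
      exact hinj e ▸ hy
    · obtain ⟨y, hy⟩ := hne
      obtain ⟨x, hx, rfl⟩ := hA hy
      exact ⟨x, hy⟩
    · intro x hx y hxy
      exact hcl _ hx _ ⟨x, y, hxy, rfl, rfl⟩
  · rintro ⟨H, hH⟩ ⟨K, hK⟩ h
    have h : H.map f.toHom = K.map f.toHom := congrArg Subtype.val h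
    apply Subtype.ext
    have key : ∀ H K : G.Subgraph, H.map f.toHom = K.map f.toHom → H ≤ K := by
      intro H K h
      constructor
      · intro x hx
        have : f x ∈ (K.map f.toHom).verts := by rw [← h]; exact ⟨x, hx, rfl⟩
        obtain ⟨y, hy, e⟩ := this
        exact hinj e ▸ hy
      · intro x y hxy
        have : (K.map f.toHom).Adj (f x) (f y) := by rw [← h]; exact ⟨x, y, hxy, rfl, rfl⟩
        obtain ⟨x', y', hxy', e1, e2⟩ := this
        exact hinj e1 ▸ hinj e2 ▸ hxy'
    exact le_antisymm (key _ _ h) (key _ _ h.symm)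

section pineapple

theorem pa_ll {n g : ℕ} (a b : Fin g) :
    (pineapple n g).Adj (Sum.inl a) (Sum.inl b) ↔ (cycleGraph g).Adj a b := by
  simp only [pineapple, fromRel_adj]
  constructor
  · rintro ⟨-, (⟨x, y, h1, h2, h⟩ | ⟨x, y, -, -, h⟩) | (⟨x, y, h1, h2, h⟩ | ⟨x, y, -, -, h⟩)⟩
    · cases h1; cases h2; exact h
    · cases h
    · cases h1; cases h2; exact h.symm
    · cases h
  · intro h
    exact ⟨fun e => h.ne (Sum.inl_injective e), Or.inl (Or.inl ⟨a, b, rfl, rfl, h⟩)⟩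

theorem pa_lr {n g : ℕ} (a : Fin g) (i : Fin (n - g)) :
    (pineapple n g).Adj (Sum.inl a) (Sum.inr i) ↔ (a : ℕ) = 0 := by
  simp only [pineapple, fromRel_adj]
  constructor
  · rintro ⟨-, (⟨x, y, h1, h2, h⟩ | ⟨x, y, h1, h2, h⟩) | (⟨x, y, h1, h2, h⟩ | ⟨x, y, h1, -, h⟩)⟩
    · cases h2
    · cases h1; exact h2
    · cases h1
    · cases h1
  · intro h
    exact ⟨by simp, Or.inl (Or.inr ⟨a, i, rfl, h, rfl⟩)⟩

theorem pa_rr {n g : ℕ} (i j : Fin (n - g)) :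
    ¬ (pineapple n g).Adj (Sum.inr i) (Sum.inr j) := by
  simp only [pineapple, fromRel_adj]
  rintro ⟨-, (⟨x, y, h1, h2, h⟩ | ⟨x, y, h1, h2, h⟩) | (⟨x, y, h1, h2, h⟩ | ⟨x, y, h1, -, h⟩)⟩ <;>
    cases h1

theorem cyc_adj {m : ℕ} (a b : ZMod (m + 3)) :
    (cycleGraph (m + 3)).Adj (a : Fin (m + 3)) (b : Fin (m + 3)) ↔ b = a + 1 ∨ a = b + 1 := by
  refine Iff.trans (cycleGraph_adj (n := m + 1) (u := (a : Fin (m + 3))) (v := (b : Fin (m + 3)))) ?_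
  change a - b = 1 ∨ b - a = 1 ↔ _
  rw [sub_eq_iff_eq_add', sub_eq_iff_eq_add', or_comm]

/-- The cycle of the pineapple. -/
def pcyc (n m : ℕ) (a : ZMod (m + 3)) : Fin (m + 3) ⊕ Fin (n - (m + 3)) :=
  Sum.inl (a : Fin (m + 3))

theorem pcyc_inj (n m : ℕ) : Function.Injective (pcyc n m) := fun _ _ h => Sum.inl_injective h

theorem pcyc_adj (n m : ℕ) (a b : ZMod (m + 3)) :
    (pineapple n (m + 3)).Adj (pcyc n m a) (pcyc n m b) ↔ b = a + 1 ∨ a = b + 1 :=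
  (pa_ll _ _).trans (cyc_adj a b)

theorem p_pine (n m : ℕ) : IsPine (pineapple n (m + 3)) (pcyc n m) Set.univ (pcyc n m 0) := by
  refine ⟨⟨0, rfl⟩, ?_⟩
  rintro (a | i) - hx (b | j) -
  · exact absurd ⟨a, rfl⟩ hx
  · exact absurd ⟨a, rfl⟩ hx
  · rw [adj_comm, pa_lr]
    constructor
    · intro h
      exact congrArg Sum.inl (Fin.ext h)
    · intro h
      have := Sum.inl_injective h
      rw [this]; rfl
  · refine ⟨fun h => absurd h (pa_rr _ _), fun h => by cases h⟩

theorem p_built (n m : ℕ) :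
    Built (pineapple n (m + 3)) (pcyc n m) (n - (m + 3)) Set.univ := by
  have key : ∀ T : Finset (Fin (n - (m + 3))),
      Built (pineapple n (m + 3)) (pcyc n m) T.card (Set.range (pcyc n m) ∪ Sum.inr '' (T : Set (Fin (n - (m + 3))))) := by
    intro T
    induction T using Finset.induction_on with
    | empty => simpa using Built.base
    | insert i T hi ih =>
      rw [Finset.card_insert_of_notMem hi, Finset.coe_insert, Set.image_insert_eq,
        Set.union_insert]
      have hir : (Sum.inr i) ∉ Set.range (pcyc n m) := by
        rintro ⟨a, h⟩; cases h
      refine Built.step ih (w := pcyc n m 0) ?_ (Or.inl ⟨0, rfl⟩) ?_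
      · rintro (h | ⟨j, hj, h⟩)
        · exact hir h
        · cases h; exact hi hj
      · intro x _
        exact (p_pine n m).2 _ (Set.mem_univ _) hir x (Set.mem_univ _)
  have := key Finset.univ
  rw [Finset.card_univ, Fintype.card_fin] at this
  convert this
  symm
  rw [Set.eq_univ_iff_forall]
  rintro (a | i)
  · exact Or.inl ⟨a, rfl⟩
  · exact Or.inr ⟨i, by simp⟩

theorem pine_iso [Finite V] {n m : ℕ} {φ : ZMod (m + 3) → V} {u : V}
    (hφ : Function.Injective φ)
    (hadj : ∀ a b, G.Adj (φ a) (φ b) ↔ b = a + 1 ∨ a = b + 1)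
    (hcard : (Set.range φ)ᶜ.ncard = n - (m + 3)) (h : IsPine G φ Set.univ u) :
    Nonempty (G ≃g pineapple n (m + 3)) := by
  obtain ⟨⟨c, rfl⟩, h⟩ := h
  have hc' : Nat.card ((Set.range φ)ᶜ : Set V) = n - (m + 3) := by
    rw [← hcard]; rfl
  let e : ((Set.range φ)ᶜ : Set V) ≃ Fin (n - (m + 3)) := Finite.equivFinOfCardEq hc'
  let f : Fin (m + 3) ⊕ Fin (n - (m + 3)) → V :=
    Sum.elim (fun a => φ (c + (show ZMod (m + 3) from a))) (fun i => (e.symm i : V))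
  have hnr : ∀ i, (e.symm i : V) ∉ Set.range φ := fun i => (e.symm i).2
  have hfi : Function.Injective f := by
    rintro (a | i) (b | j) hab
    · have h1 : c + (show ZMod (m + 3) from a) = c + (show ZMod (m + 3) from b) := hφ hab
      have h2 : (show ZMod (m + 3) from a) = (show ZMod (m + 3) from b) := add_left_cancel h1
      exact congrArg Sum.inl h2
    · exact absurd ⟨_, hab⟩ (hnr j)
    · exact absurd ⟨_, hab.symm⟩ (hnr i)
    · exact congrArg Sum.inr (e.symm.injective (Subtype.ext hab))
  have hfs : Function.Surjective f := by
    intro x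
    by_cases hx : x ∈ Set.range φ
    · obtain ⟨a, rfl⟩ := hx
      exact ⟨Sum.inl (a - c : ZMod (m + 3)), congrArg φ (add_sub_cancel c a)⟩
    · exact ⟨Sum.inr (e ⟨x, hx⟩), by simp [f]⟩
  have hlr : ∀ (a : Fin (m + 3)) (i), G.Adj (e.symm i : V) (f (Sum.inl a)) ↔ (a : ℕ) = 0 := by
    intro a i
    rw [h _ (Set.mem_univ _) (hnr i) _ (Set.mem_univ _)]
    change φ (c + (show ZMod (m + 3) from a)) = φ c ↔ _
    rw [hφ.eq_iff, add_eq_left]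
    exact ⟨fun h => congrArg Fin.val h, fun h => Fin.ext h⟩
  refine ⟨(RelIso.mk (Equiv.ofBijective f ⟨hfi, hfs⟩) ?_ : pineapple n (m + 3) ≃g G).symm⟩
  rintro (a | i) (b | j)
  · rw [pa_ll]
    change G.Adj (φ _) (φ _) ↔ _
    rw [hadj]
    refine Iff.trans ?_ (cyc_adj (a : ZMod (m + 3)) b).symm
    rw [add_assoc, add_assoc, add_right_inj, add_right_inj]
  · rw [pa_lr, ← hlr a j, adj_comm]
    rfl
  · rw [adj_comm (pineapple _ _), pa_lr, ← hlr b i]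
    rfl
  · refine ⟨fun hh => ?_, fun hh => absurd hh (pa_rr _ _)⟩
    have := (h _ (Set.mem_univ _) (hnr i) _ (Set.mem_univ _)).1 hh
    exact absurd ⟨c, this.symm⟩ (hnr j)

end pineapple

end Pine

/-- For `3 ≤ g < n`, among all unicyclic graphs on `n` vertices with girth `g`, the
pineapple graph `U^p_{n,g}` uniquely maximizes the core index, and
`F(U^p_{n,g}) = n + g² - g + 1 + (2^(n-g) - 1)(2g + C(g-1,2))`. -/
theorem pineapple_maximizes_coreIndex (n g : ℕ) (hg : 3 ≤ g) (hgn : g < n) :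
    (∀ {V : Type} [Fintype V] (G : SimpleGraph V), Fintype.card V = n →
      G.Connected → Nat.card G.edgeSet = n → G.girth = g →
      (coreIndex G ≤ coreIndex (pineapple n g) ∧
        (coreIndex G = coreIndex (pineapple n g) ↔ Nonempty (G ≃g pineapple n g)))) ∧
    coreIndex (pineapple n g) =
      n + g ^ 2 - g + 1 + (2 ^ (n - g) - 1) * (2 * g + (g - 1).choose 2) := by
  obtain ⟨m, rfl⟩ : ∃ m, g = m + 3 := ⟨g - 3, by omega⟩
  have hc : 2 ≤ 2 * (m + 3) + (m + 3 - 1).choose 2 := by omega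
  have hval : coreIndex (pineapple n (m + 3)) = (m + 3) ^ 2 + 1 + (n - (m + 3)) +
      (2 ^ (n - (m + 3)) - 1) * (2 * (m + 3) + (m + 3 - 1).choose 2) := by
    rw [Pine.coreIndex_eq]
    exact (Pine.CA_main hc ⟨0⟩ (Pine.cycle_CB hg (Pine.pcyc_inj n m) (Pine.pcyc_adj n m))
      (Pine.cycle_CA hg (Pine.pcyc_inj n m) (Pine.pcyc_adj n m)) (Pine.p_built n m)).2.2
      ⟨_, Pine.p_pine n m⟩
  refine ⟨?_, ?_⟩
  · intro V _ G hV hG hE hgirth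
    have hE' : G.edgeSet.ncard = Nat.card V := by
      rw [Nat.card_eq_fintype_card, hV, ← hE]; rfl
    obtain ⟨φ, hφ, hs⟩ := Pine.exists_cycle hg hgirth
    obtain ⟨hadj, hc1, hc2⟩ := Pine.cycle_base hg hφ hs hG hE'
    have hcompl : (Set.range φ)ᶜ.ncard = n - (m + 3) := by
      have := Set.ncard_add_ncard_compl (Set.range φ)
      rw [Nat.card_eq_fintype_card, hV] at this
      omega
    have hb := Pine.build hG hE' _ 0 _ hcompl Pine.Built.base (by omega)
    rw [zero_add] at hb
    have hmain := Pine.CA_main hc ⟨0⟩ (Pine.cycle_CB hg hφ hadj) (Pine.cycle_CA hg hφ hadj) hb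
    rw [← Pine.coreIndex_eq, ← hval] at hmain
    refine ⟨hmain.1, fun h => ?_, ?_⟩
    · obtain ⟨u, hu⟩ := hmain.2.1 h
      exact Pine.pine_iso hφ hadj hcompl hu
    · rintro ⟨f⟩
      exact le_antisymm (Pine.coreIndex_le f) (Pine.coreIndex_le f.symm)
  · rw [hval]
    have : m + 3 ≤ (m + 3) ^ 2 := by nlinarith
    omega
end

section
/- For 3 ≤ g < n, among all unicyclic graphs on n vertices with girth g, the lollipop graph U^l_{n,g} uniquely minimizes the core index, and F(U^l_{n,g}) = ((n−g)/2)(n + g^2 + 3) + g^2 + 1. -/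
open SimpleGraph

/-- The lollipop graph `U^l_{n,g}`: the cycle `C_g` with a pendant path on `n - g`
vertices attached to the cycle vertex `0`. -/
def lollipop (n g : ℕ) : SimpleGraph (Fin g ⊕ Fin (n - g)) :=
  SimpleGraph.fromRel (fun x y =>
    (∃ a b : Fin g, x = Sum.inl a ∧ y = Sum.inl b ∧ (cycleGraph g).Adj a b) ∨
    (∃ (a : Fin g) (i : Fin (n - g)), x = Sum.inl a ∧ (a : ℕ) = 0 ∧ y = Sum.inr i ∧
      (i : ℕ) = 0) ∨
    (∃ i j : Fin (n - g), x = Sum.inr i ∧ y = Sum.inr j ∧ (j : ℕ) = (i : ℕ) + 1))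

namespace LolliAux

lemma rtg_lift {α β : Type} {r : α → α → Prop} {s : β → β → Prop} (f : α → β)
    (h : ∀ a b, r a b → s (f a) (f b)) {a b : α} (hab : Relation.ReflTransGen r a b) :
    Relation.ReflTransGen s (f a) (f b) := by
  induction hab with
  | refl => exact Relation.ReflTransGen.refl
  | tail _ hbc ih => exact ih.tail (h _ _ hbc)

lemma conn_iff {V : Type} {G : SimpleGraph V} (H : G.Subgraph) :
    H.Connected ↔ H.verts.Nonempty ∧
      ∀ x ∈ H.verts, ∀ y ∈ H.verts, Relation.ReflTransGen H.Adj x y := by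
  rw [Subgraph.connected_iff, Subgraph.preconnected_iff, and_comm]
  refine and_congr_right fun _ => ?_
  constructor
  · intro h x hx y hy
    have := h ⟨x, hx⟩ ⟨y, hy⟩
    rw [reachable_iff_reflTransGen] at this
    exact rtg_lift (fun z : H.verts => (z : V)) (fun a b hab => hab) this
  · intro h x y
    rw [reachable_iff_reflTransGen]
    obtain ⟨x, hx⟩ := x
    obtain ⟨y, hy⟩ := y
    have := h x hx y hy
    induction this with
    | refl => exact Relation.ReflTransGen.refl
    | tail hab hbc ih =>
      exact (ih (H.edge_vert hbc)).tail hbc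

lemma conn_of_root {V : Type} {G : SimpleGraph V} (H : G.Subgraph) (x : V) (hx : x ∈ H.verts)
    (h : ∀ y ∈ H.verts, Relation.ReflTransGen H.Adj x y) : H.Connected := by
  rw [conn_iff]
  refine ⟨⟨x, hx⟩, fun a ha b hb => ?_⟩
  refine Relation.ReflTransGen.trans ?_ (h b hb)
  have := h a ha
  rw [← Relation.reflTransGen_swap] at this
  exact rtg_lift id (fun p q hpq => H.adj_symm hpq) this

lemma conn_closed {V : Type} {G : SimpleGraph V} {H : G.Subgraph} (hH : H.Connected)
    {x : V} (hx : x ∈ H.verts) (S : Set V) (hxS : x ∈ S)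
    (hS : ∀ a ∈ S, ∀ b, H.Adj a b → b ∈ S) : H.verts ⊆ S := by
  intro y hy
  have := ((conn_iff H).1 hH).2 x hx y hy
  clear hy
  induction this with
  | refl => exact hxS
  | tail hab hbc ih => exact hS _ ih _ hbc

/-- Attach a pendant vertex `none` at `u`. -/
def addLeaf {V : Type} (G : SimpleGraph V) (u : V) : SimpleGraph (Option V) where
  Adj x y := match x, y with
    | some a, some b => G.Adj a b
    | some a, none => a = u
    | none, some b => b = u
    | none, none => False
  symm := ⟨by
    rintro (_ | a) (_ | b) h
    · exact h
    · exact h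
    · exact h
    · exact G.adj_symm h⟩
  loopless := ⟨by
    rintro (_ | a) h
    · exact h
    · exact G.irrefl h⟩

section
variable {V : Type} (G : SimpleGraph V) (u : V)

@[simp] lemma addLeaf_ss (a b : V) : (addLeaf G u).Adj (some a) (some b) ↔ G.Adj a b := Iff.rfl
@[simp] lemma addLeaf_sn (a : V) : (addLeaf G u).Adj (some a) none ↔ a = u := Iff.rfl
@[simp] lemma addLeaf_ns (a : V) : (addLeaf G u).Adj none (some a) ↔ a = u := Iff.rfl
@[simp] lemma addLeaf_nn : (addLeaf G u).Adj none none ↔ False := Iff.rfl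

/-- A subgraph of `G` as a subgraph of `addLeaf G u`; the leaf edge is added when `p` holds. -/
def lift (p : Prop) (H : G.Subgraph) : (addLeaf G u).Subgraph where
  verts := {x | match x with
    | some a => a ∈ H.verts
    | none => p ∧ u ∈ H.verts}
  Adj x y := match x, y with
    | some a, some b => H.Adj a b
    | some a, none => a = u ∧ p ∧ u ∈ H.verts
    | none, some b => b = u ∧ p ∧ u ∈ H.verts
    | none, none => False
  adj_sub := by
    rintro (_ | a) (_ | b) h
    · exact h
    · exact h.1
    · exact h.1
    · exact H.adj_sub h
  edge_vert := by
    rintro (_ | a) (_ | b) h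
    · exact h.elim
    · exact h.2
    · exact h.1 ▸ h.2.2
    · exact H.edge_vert h
  symm := ⟨by
    rintro (_ | a) (_ | b) h
    · exact h
    · exact h
    · exact h
    · exact H.adj_symm h⟩

/-- Restrict a subgraph of `addLeaf G u` to `G`. -/
def down (K : (addLeaf G u).Subgraph) : G.Subgraph where
  verts := {a | some a ∈ K.verts}
  Adj a b := K.Adj (some a) (some b)
  adj_sub := fun h => K.adj_sub h
  edge_vert := fun h => K.edge_vert h
  symm := ⟨fun a b h => K.adj_symm h⟩

variable {G u}

lemma down_lift (p : Prop) (H : G.Subgraph) : down G u (lift G u p H) = H := by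
  ext <;> rfl

lemma lift_injective (p : Prop) : Function.Injective (lift G u p) :=
  Function.LeftInverse.injective (down_lift p)

@[simp] lemma some_mem_lift (p : Prop) (H : G.Subgraph) (x : V) :
    some x ∈ (lift G u p H).verts ↔ x ∈ H.verts := Iff.rfl

@[simp] lemma none_mem_lift (p : Prop) (H : G.Subgraph) :
    none ∈ (lift G u p H).verts ↔ p ∧ u ∈ H.verts := Iff.rfl

lemma lift_connected (p : Prop) {H : G.Subgraph} (hH : H.Connected) :
    (lift G u p H).Connected := by
  obtain ⟨⟨x, hx⟩, h⟩ := (conn_iff H).1 hH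
  have key : ∀ y ∈ H.verts,
      Relation.ReflTransGen (lift G u p H).Adj (some x) (some y) := fun y hy =>
    rtg_lift some (fun _ _ hab => hab) (h x hx y hy)
  refine conn_of_root _ (some x) hx ?_
  rintro (_ | y) hy
  · exact (key u hy.2).tail (show _ from ⟨rfl, hy⟩)
  · exact key y hy

lemma down_connected {K : (addLeaf G u).Subgraph} (hK : K.Connected)
    (h : none ∈ K.verts → K.Adj (some u) none) (hne : ∃ a, some a ∈ K.verts) :
    (down G u K).Connected := by
  rw [conn_iff]
  refine ⟨hne, fun x hx y hy => ?_⟩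
  have := ((conn_iff K).1 hK).2 _ hx _ hy
  have key : ∀ z, Relation.ReflTransGen K.Adj (some x) z →
      Relation.ReflTransGen (down G u K).Adj x (z.getD u) := by
    intro z hz
    induction hz with
    | refl => exact Relation.ReflTransGen.refl
    | @tail b c hab hbc ih =>
      cases b with
      | none =>
        cases c with
        | none => exact ih
        | some c =>
          have : c = u := K.adj_sub hbc
          subst this
          exact ih
      | some b =>
        cases c with
        | none =>
          have : b = u := K.adj_sub hbc
          subst this
          exact ih
        | some c => exact ih.tail hbc
  exact key _ this

lemma conn_cases (K : (addLeaf G u).Subgraph) (hK : K.Connected) :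
    (∃ H : G.Subgraph, H.Connected ∧ K = lift G u False H) ∨
    K = (addLeaf G u).singletonSubgraph none ∨
    (∃ H : G.Subgraph, (H.Connected ∧ u ∈ H.verts) ∧ K = lift G u True H) := by
  by_cases hn : none ∈ K.verts
  · by_cases he : K.Adj (some u) none
    · right; right
      have hu : some u ∈ K.verts := K.edge_vert he
      refine ⟨down G u K, ⟨down_connected hK (fun _ => he) ⟨u, hu⟩, hu⟩, ?_⟩
      ext x y
      · cases x with
        | none => exact ⟨fun _ => ⟨trivial, hu⟩, fun _ => hn⟩
        | some a => exact Iff.rfl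
      · cases x with
        | none =>
          cases y with
          | none => exact ⟨fun h => (K.adj_sub h), fun h => h.elim⟩
          | some b =>
            refine ⟨fun h => ⟨K.adj_sub h, trivial, hu⟩, fun h => ?_⟩
            rw [h.1]; exact K.adj_symm he
        | some a =>
          cases y with
          | none =>
            refine ⟨fun h => ⟨K.adj_sub h, trivial, hu⟩, fun h => ?_⟩
            rw [h.1]; exact he
          | some b => exact Iff.rfl
    · right; left
      have hno : ∀ b, ¬ K.Adj none b := by
        rintro (_ | b) hb
        · exact K.adj_sub hb
        · have : b = u := K.adj_sub hb
          subst this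
          exact he (K.adj_symm hb)
      have hsub := conn_closed hK hn {none} rfl (fun a ha b hb => by
        rw [Set.mem_singleton_iff] at ha
        subst ha
        exact (hno _ hb).elim)
      ext x y
      · constructor
        · intro h; exact hsub h
        · intro h
          have : x = none := h
          rw [this]; exact hn
      · constructor
        · intro h
          have hx := hsub (K.edge_vert h)
          rw [Set.mem_singleton_iff] at hx
          subst hx
          exact (hno _ h).elim
        · intro h; exact h.elim
  · left
    have hne : ∃ a, some a ∈ K.verts := by
      obtain ⟨x, hx⟩ := ((conn_iff K).1 hK).1
      cases x with
      | none => exact (hn hx).elim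
      | some a => exact ⟨a, hx⟩
    refine ⟨down G u K, down_connected hK (fun h => (hn h).elim) hne, ?_⟩
    ext x y
    · cases x with
      | none => exact ⟨fun h => (hn h).elim, fun h => h.1.elim⟩
      | some a => exact Iff.rfl
    · cases x with
      | none => exact ⟨fun h => (hn (K.edge_vert h)).elim, fun h => by
          cases y with
          | none => exact h.elim
          | some b => exact h.2.1.elim⟩
      | some a =>
        cases y with
        | none => exact ⟨fun h => (hn (K.edge_vert (K.adj_symm h))).elim, fun h => h.2.1.elim⟩
        | some b => exact Iff.rfl

end

/-- number of connected subgraphs containing all vertices in `S` -/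
noncomputable def cnt {V : Type} (G : SimpleGraph V) (S : Set V) : ℕ :=
  {H : G.Subgraph | H.Connected ∧ S ⊆ H.verts}.ncard

lemma coreIndex_eq {V : Type} (G : SimpleGraph V) : coreIndex G = cnt G ∅ := by
  unfold coreIndex cnt
  rw [← Nat.card_coe_set_eq]
  simp only [Set.empty_subset, and_true]
  rfl

section
variable {V : Type} [Finite V] (G : SimpleGraph V) (u : V)

lemma cnt_empty : cnt (addLeaf G u) ∅ = cnt G ∅ + (1 + cnt G {u}) := by
  have : {K : (addLeaf G u).Subgraph | K.Connected ∧ ∅ ⊆ K.verts} =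
      (lift G u False '' {H | H.Connected ∧ ∅ ⊆ H.verts}) ∪
      ({(addLeaf G u).singletonSubgraph none} ∪
        lift G u True '' {H | H.Connected ∧ {u} ⊆ H.verts}) := by
    ext K
    constructor
    · rintro ⟨hK, -⟩
      obtain ⟨H, hH, rfl⟩ | rfl | ⟨H, hH, rfl⟩ := conn_cases K hK
      · exact Or.inl ⟨H, ⟨hH, by simp⟩, rfl⟩
      · exact Or.inr (Or.inl rfl)
      · exact Or.inr (Or.inr ⟨H, ⟨hH.1, by simpa using hH.2⟩, rfl⟩)
    · rintro (⟨H, hH, rfl⟩ | rfl | ⟨H, hH, rfl⟩)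
      · exact ⟨lift_connected _ hH.1, by simp⟩
      · exact ⟨Subgraph.singletonSubgraph_connected, by simp⟩
      · exact ⟨lift_connected _ hH.1, by simp⟩
  unfold cnt
  rw [this, Set.ncard_union_eq _ (Set.toFinite _) (Set.toFinite _),
    Set.ncard_union_eq _ (Set.toFinite _) (Set.toFinite _),
    Set.ncard_image_of_injective _ (lift_injective _),
    Set.ncard_image_of_injective _ (lift_injective _), Set.ncard_singleton]
  · rw [Set.disjoint_singleton_left]
    rintro ⟨H, hH, h⟩
    have : some u ∈ (lift G u True H).verts := by simpa using hH.2
    rw [h] at this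
    simp at this
  · rw [Set.disjoint_left]
    rintro _ ⟨H, hH, rfl⟩ (h | ⟨H', hH', h⟩)
    · have : none ∈ (lift G u False H).verts := by
        rw [h]; simp
      simp at this
    · have : none ∈ (lift G u False H).verts := by
        rw [← h]; simpa using hH'.2
      simp at this

lemma cnt_none : cnt (addLeaf G u) {none} = 1 + cnt G {u} := by
  have : {K : (addLeaf G u).Subgraph | K.Connected ∧ {none} ⊆ K.verts} =
      ({(addLeaf G u).singletonSubgraph none} ∪
        lift G u True '' {H | H.Connected ∧ {u} ⊆ H.verts}) := by
    ext K
    constructor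
    · rintro ⟨hK, h⟩
      obtain ⟨H, hH, rfl⟩ | rfl | ⟨H, hH, rfl⟩ := conn_cases K hK
      · simp at h
      · exact (Or.inl rfl)
      · exact (Or.inr ⟨H, ⟨hH.1, by simpa using hH.2⟩, rfl⟩)
    · rintro (rfl | ⟨H, hH, rfl⟩)
      · exact ⟨Subgraph.singletonSubgraph_connected, by simp⟩
      · exact ⟨lift_connected _ hH.1, by simpa using hH.2⟩
  unfold cnt
  rw [this,
    Set.ncard_union_eq _ (Set.toFinite _) (Set.toFinite _),
    Set.ncard_image_of_injective _ (lift_injective _), Set.ncard_singleton]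
  · rw [Set.disjoint_singleton_left]
    rintro ⟨H, hH, h⟩
    have : some u ∈ (lift G u True H).verts := by simpa using hH.2
    rw [h] at this
    simp at this

lemma cnt_some (x : V) : cnt G {x} + cnt G {x, u} ≤ cnt (addLeaf G u) {some x} := by
  unfold cnt
  rw [← Set.ncard_image_of_injective {H : G.Subgraph | H.Connected ∧ {x} ⊆ H.verts}
    (lift_injective (u := u) False),
    ← Set.ncard_image_of_injective {H : G.Subgraph | H.Connected ∧ {x, u} ⊆ H.verts}
    (lift_injective (u := u) True), ← Set.ncard_union_eq _ (Set.toFinite _) (Set.toFinite _)]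
  · refine Set.ncard_le_ncard ?_ (Set.toFinite _)
    rintro _ (⟨H, hH, rfl⟩ | ⟨H, hH, rfl⟩)
    · exact ⟨lift_connected _ hH.1, by simpa using hH.2⟩
    · refine ⟨lift_connected _ hH.1, ?_⟩
      have := hH.2 (Set.mem_insert _ _)
      simpa using this
  · rw [Set.disjoint_left]
    rintro _ ⟨H, hH, rfl⟩ ⟨H', hH', h⟩
    have : none ∈ (lift G u False H).verts := by
      rw [← h]
      have := hH'.2 (Set.mem_insert_of_mem _ rfl)
      simpa using this
    simp at this

end

lemma cnt_iso {V W : Type} {G : SimpleGraph V} {G' : SimpleGraph W}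
    (e : G ≃g G') (S : Set V) : cnt G S = cnt G' (e '' S) := by
  have key : ∀ {V W : Type} {G : SimpleGraph V} {G' : SimpleGraph W}
    (e : G ≃g G') (H : G.Subgraph), H.Connected → (H.map e.toHom).Connected := by
    intro V W G G' e H hH
    obtain ⟨⟨x, hx⟩, h⟩ := (conn_iff H).1 hH
    refine conn_of_root _ (e x) ⟨x, hx, rfl⟩ ?_
    rintro _ ⟨y, hy, rfl⟩
    exact rtg_lift e (fun a b hab => ⟨a, b, hab, rfl, rfl⟩) (h x hx y hy)
  have inv : ∀ {V W : Type} {G : SimpleGraph V} {G' : SimpleGraph W}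
    (e : G ≃g G') (H : G.Subgraph), (H.map e.toHom).map e.symm.toHom = H := by
    intro V W G G' e H
    rw [← Subgraph.map_comp]
    convert Subgraph.map_id H
    ext x
    simp
  unfold cnt
  refine Set.ncard_congr (fun H _ => H.map e.toHom) ?_ ?_ ?_
  · rintro H ⟨h1, h2⟩
    exact ⟨key e H h1, Set.image_mono h2⟩
  · intro H K _ _ h
    have := congrArg (Subgraph.map e.symm.toHom) h
    simpa only [inv] using this
  · rintro K ⟨h1, h2⟩
    refine ⟨K.map e.symm.toHom, ⟨key e.symm K h1, ?_⟩, inv e.symm K⟩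
    intro x hx
    refine ⟨e x, h2 ⟨x, hx, rfl⟩, ?_⟩
    simp

/-- the cycle on `ZMod g` -/
def circ (g : ℕ) : SimpleGraph (ZMod g) := SimpleGraph.fromRel (fun a b => b = a + 1)

section
variable {g : ℕ}

lemma one_ne (hg : 3 ≤ g) : (1 : ZMod g) ≠ 0 := by
  have : Fact (1 < g) := ⟨by omega⟩
  exact one_ne_zero

lemma two_ne (hg : 3 ≤ g) : (1 + 1 : ZMod g) ≠ 0 := by
  intro h
  have : ((2 : ℕ) : ZMod g) = 0 := by push_cast; rw [← h]; ring
  rw [ZMod.natCast_eq_zero_iff] at this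
  exact absurd (Nat.le_of_dvd (by norm_num) this) (by omega)

lemma circ_adj (hg : 3 ≤ g) (a b : ZMod g) : (circ g).Adj a b ↔ b = a + 1 ∨ a = b + 1 := by
  unfold circ
  rw [SimpleGraph.fromRel_adj]
  refine ⟨fun h => h.2, fun h => ⟨?_, h⟩⟩
  rintro rfl
  have := one_ne hg
  simp at h
  exact this h

lemma val_succ (hg : 3 ≤ g) (z : ZMod g) (h : z.val + 1 < g) : (z + 1).val = z.val + 1 := by
  have : NeZero g := ⟨by omega⟩
  have : Fact (1 < g) := ⟨by omega⟩
  rw [ZMod.val_add_of_lt] <;> rw [ZMod.val_one]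
  exact h

lemma val_neg_one' (hg : 3 ≤ g) : (-1 : ZMod g).val = g - 1 := by
  obtain ⟨k, rfl⟩ : ∃ k, g = k + 1 := ⟨g - 1, by omega⟩
  simpa using ZMod.val_neg_one k

lemma val_pred (hg : 3 ≤ g) (z : ZMod g) (h : z ≠ 0) : (z - 1).val + 1 = z.val := by
  have : NeZero g := ⟨by omega⟩
  have hlt := ZMod.val_lt (z - 1)
  rcases Nat.lt_or_ge ((z - 1).val + 1) g with h1 | h1
  · rw [← val_succ hg _ h1]; simp
  · exfalso
    apply h
    have : (z - 1).val = (-1 : ZMod g).val := by rw [val_neg_one' hg]; omega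
    have := ZMod.val_injective g this
    have h2 : z = (z - 1) + 1 := by ring
    rw [h2, this]; ring

/-- The arc with `l` edges starting at `s`. -/
def arc (hg : 3 ≤ g) (s : ZMod g) (l : ℕ) (hl : l < g) : (circ g).Subgraph where
  verts := {x | (x - s).val ≤ l}
  Adj x y := (y = x + 1 ∧ (x - s).val < l) ∨ (x = y + 1 ∧ (y - s).val < l)
  adj_sub := fun h => (circ_adj hg _ _).2 (h.imp And.left And.left)
  edge_vert := by
    rintro x y (⟨_, h⟩ | ⟨rfl, h⟩)
    · exact h.le
    · show (y + 1 - s).val ≤ l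
      rw [show y + 1 - s = (y - s) + 1 by ring, val_succ hg _ (by omega)]
      exact h
  symm := ⟨fun _ _ h => Or.symm h⟩

lemma arc_connected (hg : 3 ≤ g) (s : ZMod g) (l : ℕ) (hl : l < g) :
    (arc hg s l hl).Connected := by
  have : NeZero g := ⟨by omega⟩
  refine conn_of_root _ s (by simp [arc]) ?_
  have key : ∀ k : ℕ, k ≤ l → Relation.ReflTransGen (arc hg s l hl).Adj s (s + k) := by
    intro k
    induction k with
    | zero => intro _; simp; exact Relation.ReflTransGen.refl
    | succ k ih =>
      intro hk
      refine (ih (by omega)).tail (Or.inl ⟨by push_cast; ring, ?_⟩)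
      rw [add_sub_cancel_left, ZMod.val_natCast_of_lt (by omega)]
      omega
  intro y hy
  have := key _ hy
  rwa [ZMod.natCast_zmod_val, add_sub_cancel] at this

lemma arc_not_adj (hg : 3 ≤ g) (s : ZMod g) (l : ℕ) (hl : l < g) :
    ¬ (arc hg s l hl).Adj (s - 1) s := by
  rintro (⟨_, h⟩ | ⟨h, _⟩)
  · rw [show s - 1 - s = -1 by ring, val_neg_one' hg] at h
    omega
  · apply two_ne hg
    have : s - (s - 1) - 1 = s - (s + 1) - 1 := by rw [h]
    have h2 : (1 + 1 : ZMod g) = 1 + (s - (s - 1) - 1) - (s - (s + 1) - 1) - 1 := by ring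
    rw [h2, this]; ring

lemma arc_inj (hg : 3 ≤ g) (s s' : ZMod g) (l l' : ℕ) (hl : l < g) (hl' : l' < g)
    (h : arc hg s l hl = arc hg s' l' hl') : s = s' ∧ l = l' := by
  have : NeZero g := ⟨by omega⟩
  have hs : s = s' := by
    by_contra hne
    apply arc_not_adj hg s l hl
    have hm : s ∈ (arc hg s l hl).verts := by simp [arc]
    rw [h] at hm ⊢
    have hm : (s - s').val ≤ l' := hm
    left
    refine ⟨by ring, ?_⟩
    have := val_pred hg (s - s') (sub_ne_zero.2 hne)
    rw [show s - 1 - s' = s - s' - 1 by ring]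
    omega
  subst hs
  refine ⟨rfl, ?_⟩
  have key : ∀ k < g, (s + (k : ZMod g) ∈ (arc hg s l hl).verts ↔ k ≤ l) ∧
      (s + (k : ZMod g) ∈ (arc hg s l' hl').verts ↔ k ≤ l') := by
    intro k hk
    simp [arc, ZMod.val_natCast_of_lt hk]
  have h1 := key l hl
  have h2 := key l' hl'
  rw [h] at h1 h2
  have := h1.1.2 le_rfl
  have := h1.2.1 this
  have := h2.2.2 le_rfl
  have := h2.1.1 this
  omega

lemma arc_surj (hg : 3 ≤ g) (H : (circ g).Subgraph) (hH : H.Connected) (hT : H ≠ ⊤) :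
    ∃ s l, ∃ hl : l < g, H = arc hg s l hl := by
  classical
  have : NeZero g := ⟨by omega⟩
  have h1 : ∃ s ∈ H.verts, ¬ H.Adj (s - 1) s := by
    by_contra! hcon
    apply hT
    obtain ⟨x, hx⟩ := ((conn_iff H).1 hH).1
    have hk : ∀ k : ℕ, x - (k : ZMod g) ∈ H.verts := by
      intro k
      induction k with
      | zero => simpa using hx
      | succ k ih =>
        have := H.edge_vert (hcon _ ih)
        rwa [sub_sub, ← Nat.cast_succ] at this
    have hall : ∀ y, y ∈ H.verts := by
      intro y
      have := hk (x - y).val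
      rwa [ZMod.natCast_zmod_val, sub_sub_cancel] at this
    have hadj : ∀ y, H.Adj y (y + 1) := by
      intro y
      have := hcon _ (hall (y + 1))
      rwa [add_sub_cancel_right] at this
    ext a b
    · simp [hall]
    · rw [Subgraph.top_adj]
      refine ⟨fun h => H.adj_sub h, fun h => ?_⟩
      rcases (circ_adj hg _ _).1 h with rfl | rfl
      · exact hadj _
      · exact (hadj _).symm
  obtain ⟨s, hs, hns⟩ := h1
  have hex : ∃ k : ℕ, ¬ H.Adj (s + k) (s + k + 1) := by
    refine ⟨g - 1, ?_⟩
    have : s + ((g - 1 : ℕ) : ZMod g) = s - 1 := by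
      rw [Nat.cast_sub (by omega)]; simp; ring
    rw [this, sub_add_cancel]
    exact hns
  have hlt : Nat.find hex < g := by
    have : Nat.find hex ≤ g - 1 := Nat.find_min' hex (by
      have : s + ((g - 1 : ℕ) : ZMod g) = s - 1 := by
        rw [Nat.cast_sub (by omega)]; simp; ring
      rw [this, sub_add_cancel]
      exact hns)
    omega
  have hspec := Nat.find_spec hex
  have hmin : ∀ k < Nat.find hex, H.Adj (s + k) (s + k + 1) := fun k hk => by
    have := Nat.find_min hex hk
    simpa using this
  generalize Nat.find hex = l at hlt hspec hmin
  have rep : ∀ x : ZMod g, s + ((x - s).val : ZMod g) = x := by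
    intro x
    rw [ZMod.natCast_zmod_val, add_sub_cancel]
  have hadj : ∀ x, (x - s).val < l → H.Adj x (x + 1) := by
    intro x hx
    have := hmin _ hx
    rwa [rep] at this
  have hnadj : ∀ x, (x - s).val = l → ¬ H.Adj x (x + 1) := by
    intro x hx h
    apply hspec
    rw [← hx, rep]
    exact h
  have hsub : H.verts ⊆ {x | (x - s).val ≤ l} := by
    refine conn_closed hH hs _ (by simp) ?_
    intro a ha b hab
    have ha : (a - s).val ≤ l := ha
    rcases (circ_adj hg _ _).1 (H.adj_sub hab) with rfl | rfl
    · have hne : (a - s).val ≠ l := fun h => hnadj a h hab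
      show (a + 1 - s).val ≤ l
      rw [show a + 1 - s = (a - s) + 1 by ring, val_succ hg _ (by omega)]
      omega
    · have hne : b + 1 - s ≠ 0 := by
        intro h
        rw [sub_eq_zero] at h
        apply hns
        rw [← h, add_sub_cancel_right]
        exact h ▸ hab.symm
      have := val_pred hg _ hne
      rw [show b + 1 - s - 1 = b - s by ring] at this
      show (b - s).val ≤ l
      omega
  refine ⟨s, l, hlt, ?_⟩
  ext a b
  · refine ⟨fun h => hsub h, fun h => ?_⟩
    have h : (a - s).val ≤ l := h
    by_cases h0 : a - s = 0
    · rw [sub_eq_zero] at h0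
      rw [h0]; exact hs
    · have h1 := val_pred hg _ h0
      have h2 := hadj (a - 1) (by rw [show a - 1 - s = a - s - 1 by ring]; omega)
      rw [sub_add_cancel] at h2
      exact H.edge_vert h2.symm
  · constructor
    · intro h
      have main : ∀ x, H.Adj x (x + 1) → (x - s).val < l := by
        intro x hx
        have h1 : (x - s).val ≤ l := hsub (H.edge_vert hx)
        have h2 : (x - s).val ≠ l := fun h => hnadj x h hx
        omega
      rcases (circ_adj hg _ _).1 (H.adj_sub h) with rfl | rfl
      · exact Or.inl ⟨rfl, main _ h⟩
      · exact Or.inr ⟨rfl, main _ h.symm⟩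
    · rintro (⟨rfl, h⟩ | ⟨rfl, h⟩)
      · exact hadj _ h
      · exact (hadj _ h).symm

lemma arc_ne_top (hg : 3 ≤ g) (s : ZMod g) (l : ℕ) (hl : l < g) : arc hg s l hl ≠ ⊤ := by
  intro h
  apply arc_not_adj hg s l hl
  rw [h, Subgraph.top_adj, circ_adj hg]
  left; ring

lemma top_connected (hg : 3 ≤ g) : (⊤ : (circ g).Subgraph).Connected := by
  have : NeZero g := ⟨by omega⟩
  refine Subgraph.Connected.mono le_top ?_ (arc_connected hg 0 (g - 1) (by omega))
  ext x
  have := ZMod.val_lt x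
  simp [arc]
  omega

lemma two_spanning_circ (hg : 3 ≤ g) : ∃ H₁ H₂ : (circ g).Subgraph, H₁ ≠ H₂ ∧ H₁.Connected ∧
    H₂.Connected ∧ H₁.verts = Set.univ ∧ H₂.verts = Set.univ := by
  have : NeZero g := ⟨by omega⟩
  refine ⟨_, _, arc_ne_top hg 0 (g - 1) (by omega), arc_connected _ _ _ _, top_connected hg, ?_, rfl⟩
  ext x
  have := ZMod.val_lt x
  simp [arc]
  omega

lemma cnt_circ (hg : 3 ≤ g) (S : Set (ZMod g)) :
    cnt (circ g) S = 1 + {p : ZMod g × Fin g | ∀ x ∈ S, (x - p.1).val ≤ p.2}.ncard := by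
  have : NeZero g := ⟨by omega⟩
  have inj : Function.Injective (fun p : ZMod g × Fin g => arc hg p.1 p.2 p.2.2) := by
    rintro ⟨s, l⟩ ⟨s', l'⟩ h
    obtain ⟨h1, h2⟩ := arc_inj hg _ _ _ _ _ _ h
    simp only at h1 h2
    rw [h1, Fin.ext h2]
  unfold cnt
  rw [← Set.ncard_image_of_injective _ inj, ← Set.ncard_singleton (⊤ : (circ g).Subgraph),
    ← Set.ncard_union_eq _ (Set.toFinite _) (Set.toFinite _)]
  · congr 1
    ext H
    constructor
    · rintro ⟨h1, h2⟩
      by_cases hT : H = ⊤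
      · exact Or.inl hT
      · obtain ⟨s, l, hl, rfl⟩ := arc_surj hg H h1 hT
        exact Or.inr ⟨⟨s, ⟨l, hl⟩⟩, fun x hx => h2 hx, rfl⟩
    · rintro (h | ⟨p, hp, rfl⟩)
      · have h : H = ⊤ := h
        subst h
        exact ⟨top_connected hg, by simp⟩
      · exact ⟨arc_connected _ _ _ _, hp⟩
  · rw [Set.disjoint_singleton_left]
    rintro ⟨p, _, h⟩
    exact arc_ne_top _ _ _ _ h

lemma cnt_circ_empty (hg : 3 ≤ g) : cnt (circ g) ∅ = g ^ 2 + 1 := by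
  have : NeZero g := ⟨by omega⟩
  rw [cnt_circ hg]
  simp [Set.ncard_univ]
  ring

lemma cnt_circ_single (hg : 3 ≤ g) (u : ZMod g) :
    cnt (circ g) {u} = 1 + ∑ k ∈ Finset.range g, (g - k) := by
  have : NeZero g := ⟨by omega⟩
  rw [cnt_circ hg]
  congr 1
  have h1 : {p : ZMod g × Fin g | ∀ x ∈ ({u} : Set (ZMod g)), (x - p.1).val ≤ p.2} =
      ((Finset.univ.filter fun p : ZMod g × Fin g => (u - p.1).val ≤ p.2) : Finset _) := by
    ext p; simp
  rw [h1, Set.ncard_coe_finset, Finset.card_filter, Fintype.sum_prod_type]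
  have h2 : ∀ s : ZMod g, (∑ l : Fin g, if (u - s).val ≤ (l : ℕ) then 1 else 0)
      = g - (u - s).val := by
    intro s
    rw [Fin.sum_univ_eq_sum_range (fun l => if (u - s).val ≤ l then 1 else 0) g,
      ← Finset.card_filter]
    rw [show (Finset.range g).filter (fun l => (u - s).val ≤ l) = Finset.Ico (u - s).val g by
      ext x; simp; tauto]
    simp
  simp only [h2]
  rw [Fintype.sum_equiv (Equiv.subLeft u) (fun s => g - (u - s).val) (fun z => g - z.val)
    (fun s => rfl)]
  obtain ⟨k, rfl⟩ : ∃ k, g = k + 1 := ⟨g - 1, by omega⟩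
  exact Fin.sum_univ_eq_sum_range (fun l => (k + 1) - l) (k + 1)

end

/-- Graphs obtained from the cycle `C_g` by successively attaching `m` pendant vertices. -/
inductive Uni (g : ℕ) : ℕ → (V : Type) → SimpleGraph V → Prop
  | base {V : Type} {G : SimpleGraph V} (e : circ g ≃g G) : Uni g 0 V G
  | leaf {m : ℕ} {V : Type} {G : SimpleGraph V} (h : Uni g m V G) (u : V) {W : Type}
      {G' : SimpleGraph W} (e : addLeaf G u ≃g G') : Uni g (m + 1) W G'

lemma Uni.finite {g m : ℕ} (hg : 3 ≤ g) {V : Type} {G : SimpleGraph V} (h : Uni g m V G) :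
    Finite V := by
  induction h with
  | base e =>
    have : NeZero g := ⟨by omega⟩
    exact Finite.of_equiv _ e.toEquiv
  | leaf h u e ih => exact Finite.of_equiv _ e.toEquiv

lemma map_connected {V W : Type} {G : SimpleGraph V} {G' : SimpleGraph W}
    (e : G ≃g G') (H : G.Subgraph) (hH : H.Connected) : (H.map e.toHom).Connected := by
  obtain ⟨⟨x, hx⟩, h⟩ := (conn_iff H).1 hH
  refine conn_of_root _ (e x) ⟨x, hx, rfl⟩ ?_
  rintro _ ⟨y, hy, rfl⟩
  exact rtg_lift e (fun a b hab => ⟨a, b, hab, rfl, rfl⟩) (h x hx y hy)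

lemma map_inv {V W : Type} {G : SimpleGraph V} {G' : SimpleGraph W}
    (e : G ≃g G') (H : G.Subgraph) : (H.map e.toHom).map e.symm.toHom = H := by
  rw [← Subgraph.map_comp]
  convert Subgraph.map_id H
  ext x
  simp

lemma span_iso {V W : Type} {G : SimpleGraph V} {G' : SimpleGraph W} (e : G ≃g G')
    (h : ∃ H₁ H₂ : G.Subgraph, H₁ ≠ H₂ ∧ H₁.Connected ∧
    H₂.Connected ∧ H₁.verts = Set.univ ∧ H₂.verts = Set.univ) :
    ∃ H₁ H₂ : G'.Subgraph, H₁ ≠ H₂ ∧ H₁.Connected ∧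
    H₂.Connected ∧ H₁.verts = Set.univ ∧ H₂.verts = Set.univ := by
  obtain ⟨H₁, H₂, hne, h1, h2, h3, h4⟩ := h
  refine ⟨H₁.map e.toHom, H₂.map e.toHom, ?_, map_connected e _ h1, map_connected e _ h2, ?_, ?_⟩
  · intro h
    have := congrArg (Subgraph.map e.symm.toHom) h
    rw [map_inv, map_inv] at this
    exact hne this
  · rw [Subgraph.map_verts, h3, Set.image_univ]
    exact e.surjective.range_eq
  · rw [Subgraph.map_verts, h4, Set.image_univ]
    exact e.surjective.range_eq

lemma Uni.span {g m : ℕ} (hg : 3 ≤ g) {V : Type} {G : SimpleGraph V} (h : Uni g m V G) :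
    ∃ H₁ H₂ : G.Subgraph, H₁ ≠ H₂ ∧ H₁.Connected ∧
    H₂.Connected ∧ H₁.verts = Set.univ ∧ H₂.verts = Set.univ := by
  induction h with
  | base e => exact span_iso e (two_spanning_circ hg)
  | @leaf m V G h u W G' e ih =>
    refine span_iso e ?_
    obtain ⟨H₁, H₂, hne, h1, h2, h3, h4⟩ := ih
    refine ⟨lift G u True H₁, lift G u True H₂, fun h => hne (lift_injective _ h),
      lift_connected _ h1, lift_connected _ h2, ?_, ?_⟩
    · ext x
      cases x <;> simp [h3]
    · ext x
      cases x <;> simp [h4]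

/-- number of connected subgraphs of the cycle through a given vertex -/
def cval (g : ℕ) : ℕ := 1 + ∑ k ∈ Finset.range g, (g - k)

lemma Uni.two_le {g m : ℕ} (hg : 3 ≤ g) {V : Type} {G : SimpleGraph V} (h : Uni g m V G)
    (S : Set V) : 2 ≤ cnt G S := by
  have := h.finite hg
  obtain ⟨H₁, H₂, hne, h1, h2, h3, h4⟩ := h.span hg
  unfold cnt
  rw [← Set.ncard_pair hne]
  refine Set.ncard_le_ncard ?_ (Set.toFinite _)
  rintro _ (rfl | rfl)
  · exact ⟨h1, by simp [h3]⟩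
  · exact ⟨h2, by simp [h4]⟩

lemma Uni.single {g m : ℕ} (hg : 3 ≤ g) {V : Type} {G : SimpleGraph V} (h : Uni g m V G) (x : V) :
    m + cval g ≤ cnt G {x} := by
  induction h with
  | base e =>
    rw [cnt_iso e.symm, Set.image_singleton, cnt_circ_single hg, cval]
    omega
  | @leaf m V G h u W G' e ih =>
    have := h.finite hg
    rw [cnt_iso e.symm, Set.image_singleton]
    cases e.symm x with
    | none => rw [cnt_none]; have := ih u; omega
    | some y =>
      have h1 := cnt_some G u y
      have h2 := ih y
      have h3 := h.two_le hg {y, u}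
      omega

lemma Uni.strict {g m : ℕ} (hg : 3 ≤ g) {V : Type} {G : SimpleGraph V} (h : Uni g m V G)
    (u y : V) : m + 1 + cval g < cnt (addLeaf G u) {some y} := by
  have := h.finite hg
  have h1 := cnt_some G u y
  have h2 := h.single hg y
  have h3 := h.two_le hg {y, u}
  omega

/-- the lollipop with the length of the path as parameter -/
def lolli (g m : ℕ) : SimpleGraph (Fin g ⊕ Fin m) :=
  SimpleGraph.fromRel (fun x y =>
    (∃ a b : Fin g, x = Sum.inl a ∧ y = Sum.inl b ∧ (cycleGraph g).Adj a b) ∨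
    (∃ (a : Fin g) (i : Fin m), x = Sum.inl a ∧ (a : ℕ) = 0 ∧ y = Sum.inr i ∧
      (i : ℕ) = 0) ∨
    (∃ i j : Fin m, x = Sum.inr i ∧ y = Sum.inr j ∧ (j : ℕ) = (i : ℕ) + 1))

section
variable {g m : ℕ}

lemma lolli_ll (a b : Fin g) :
    (lolli g m).Adj (Sum.inl a) (Sum.inl b) ↔ (cycleGraph g).Adj a b := by
  simp only [lolli, SimpleGraph.fromRel_adj]
  constructor
  · rintro ⟨-, h⟩
    simp at h
    rcases h with h | h
    · exact h
    · exact h.symm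
  · intro h
    exact ⟨by simpa using h.ne, Or.inl (Or.inl ⟨a, b, rfl, rfl, h⟩)⟩

lemma lolli_lr (a : Fin g) (i : Fin m) :
    (lolli g m).Adj (Sum.inl a) (Sum.inr i) ↔ (a : ℕ) = 0 ∧ (i : ℕ) = 0 := by
  simp [lolli]

lemma lolli_rl (a : Fin g) (i : Fin m) :
    (lolli g m).Adj (Sum.inr i) (Sum.inl a) ↔ (a : ℕ) = 0 ∧ (i : ℕ) = 0 := by
  rw [SimpleGraph.adj_comm, lolli_lr]

lemma lolli_rr (i j : Fin m) :
    (lolli g m).Adj (Sum.inr i) (Sum.inr j) ↔ (j : ℕ) = i + 1 ∨ (i : ℕ) = j + 1 := by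
  simp [lolli]
  intro h
  rw [Fin.ext_iff]
  omega

/-- end of the stick -/
def tip (hg : 3 ≤ g) : (m : ℕ) → Fin g ⊕ Fin m
  | 0 => Sum.inl ⟨0, by omega⟩
  | m + 1 => Sum.inr (Fin.last m)

/-- vertex equivalence extending the stick -/
def stepEquiv (g m : ℕ) : Option (Fin g ⊕ Fin m) ≃ Fin g ⊕ Fin (m + 1) where
  toFun x := match x with
    | none => Sum.inr (Fin.last m)
    | some (Sum.inl a) => Sum.inl a
    | some (Sum.inr i) => Sum.inr i.castSucc
  invFun y := match y with
    | Sum.inl a => some (Sum.inl a)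
    | Sum.inr i => if h : (i : ℕ) < m then some (Sum.inr ⟨i, h⟩) else none
  left_inv := by
    rintro (_ | (a | i)) <;> simp
  right_inv := by
    rintro (a | i)
    · rfl
    · by_cases h : (i : ℕ) < m
      · simp [h]
      · have : i = Fin.last m := by ext; simp; omega
        simp [this]

lemma tip_adj (hg : 3 ≤ g) (x : Fin g ⊕ Fin m) :
    (lolli g (m + 1)).Adj (stepEquiv g m (some x)) (Sum.inr (Fin.last m)) ↔ x = tip hg m := by
  cases m with
  | zero =>
    rcases x with a | i
    · show (lolli g 1).Adj (Sum.inl a) _ ↔ _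
      rw [lolli_lr]
      simp [tip, Fin.ext_iff]
    · exact i.elim0
  | succ m =>
    rcases x with a | i
    · show (lolli g (m + 1 + 1)).Adj (Sum.inl a) _ ↔ _
      rw [lolli_lr]
      simp [tip]
    · show (lolli g (m + 1 + 1)).Adj (Sum.inr i.castSucc) _ ↔ _
      rw [lolli_rr]
      simp [tip, Fin.ext_iff]
      omega

/-- extending the stick by one vertex -/
def stepIso (hg : 3 ≤ g) : addLeaf (lolli g m) (tip hg m) ≃g lolli g (m + 1) where
  toEquiv := stepEquiv g m
  map_rel_iff' := by
    rintro (_ | x) (_ | y)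
    · simp
    · rw [SimpleGraph.adj_comm, addLeaf_ns]
      exact tip_adj hg y
    · rw [addLeaf_sn]
      exact tip_adj hg x
    · rw [addLeaf_ss]
      rcases x with a | i <;> rcases y with b | j <;>
      simp only [stepEquiv, Equiv.coe_fn_mk, lolli_ll, lolli_lr, lolli_rl, lolli_rr,
        Fin.val_castSucc]

lemma zeroIso (hg : 3 ≤ g) : ∃ e : circ g ≃g lolli g 0, e 0 = tip hg 0 := by
  obtain ⟨k, rfl⟩ : ∃ k, g = k + 2 := ⟨g - 2, by omega⟩
  refine ⟨{ toEquiv := (Equiv.sumEmpty (Fin (k + 2)) (Fin 0)).symm, map_rel_iff' := ?_ }, rfl⟩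
  intro a b
  rw [circ_adj hg]
  refine (lolli_ll (g := k + 2) (m := 0) a b).trans (cycleGraph_adj.trans ?_)
  constructor
  · rintro (h | h)
    · right
      exact (sub_eq_iff_eq_add' (G := ZMod (k + 2))).1 h
    · left
      exact (sub_eq_iff_eq_add' (G := ZMod (k + 2))).1 h
  · rintro (h | h)
    · right
      exact (sub_eq_iff_eq_add' (G := ZMod (k + 2))).2 h
    · left
      exact (sub_eq_iff_eq_add' (G := ZMod (k + 2))).2 h

lemma lolli_uni (hg : 3 ≤ g) (m : ℕ) : Uni g m _ (lolli g m) := by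
  induction m with
  | zero => obtain ⟨e, _⟩ := zeroIso hg; exact Uni.base e
  | succ m ih => exact Uni.leaf ih (tip hg m) (stepIso hg)

lemma stepIso_none (hg : 3 ≤ g) : stepIso (m := m) hg none = tip hg (m + 1) := rfl

lemma lolli_tip (hg : 3 ≤ g) (m : ℕ) : cnt (lolli g m) {tip hg m} = m + cval g := by
  induction m with
  | zero =>
    obtain ⟨e, he⟩ := zeroIso hg
    rw [← he, ← Set.image_singleton, ← cnt_iso e, cnt_circ_single hg, cval, zero_add]
  | succ m ih =>
    rw [← stepIso_none hg, ← Set.image_singleton, ← cnt_iso, cnt_none, ih]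
    omega

/-- translation of the cycle -/
def rotIso (hg : 3 ≤ g) (c : ZMod g) : circ g ≃g circ g where
  toEquiv := Equiv.addRight c
  map_rel_iff' := by
    intro a b
    simp only [circ_adj hg, Equiv.coe_addRight]
    rw [show a + c + 1 = (a + 1) + c by ring, show b + c + 1 = (b + 1) + c by ring,
      add_left_inj, add_left_inj]

lemma tip_unique (hg : 3 ≤ g) (m : ℕ) (x : Fin g ⊕ Fin m)
    (hx : cnt (lolli g m) {x} = m + cval g) :
    ∃ a : lolli g m ≃g lolli g m, a x = tip hg m := by
  cases m with
  | zero =>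
    obtain ⟨e, he⟩ := zeroIso hg
    refine ⟨(e.symm.trans (rotIso hg (-(e.symm x)))).trans e, ?_⟩
    rw [← he]
    show e (e.symm x + -(e.symm x)) = e 0
    rw [add_neg_cancel]
  | succ m =>
    refine ⟨RelIso.refl _, ?_⟩
    show x = _
    rw [cnt_iso (stepIso hg).symm, Set.image_singleton] at hx
    cases h : (stepIso hg).symm x with
    | none =>
      rw [← stepIso_none hg, ← h]; simp
    | some y =>
      rw [h] at hx
      have := (lolli_uni hg m).strict hg (tip hg m) y
      omega

/-- functoriality of `addLeaf` -/
def addLeafCongr {V W : Type} {G : SimpleGraph V} {G' : SimpleGraph W} (e : G ≃g G') (u : V) :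
    addLeaf G u ≃g addLeaf G' (e u) where
  toEquiv := Equiv.optionCongr e.toEquiv
  map_rel_iff' := by
    rintro (_ | x) (_ | y)
    · simp
    · simp
    · simp
    · exact e.map_rel_iff

lemma Uni.min (hg : 3 ≤ g) {V : Type} {G : SimpleGraph V} (h : Uni g m V G) :
    cnt (lolli g m) ∅ ≤ cnt G ∅ ∧
      (cnt G ∅ = cnt (lolli g m) ∅ → Nonempty (G ≃g lolli g m)) := by
  induction h with
  | base e =>
    obtain ⟨e', _⟩ := zeroIso hg
    have e2 := e.symm.trans e'
    refine ⟨?_, fun _ => ⟨e2⟩⟩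
    rw [cnt_iso e2, Set.image_empty]
  | @leaf m V G h u W G' e ih =>
    have := h.finite hg
    have h1 : cnt G' ∅ = cnt G ∅ + (1 + cnt G {u}) := by
      rw [← cnt_empty, cnt_iso e, Set.image_empty]
    have h2 : cnt (lolli g (m + 1)) ∅ = cnt (lolli g m) ∅ + (1 + (m + cval g)) := by
      rw [← lolli_tip hg, ← cnt_empty, cnt_iso (stepIso hg), Set.image_empty]
    have h3 := h.single hg u
    refine ⟨by omega, fun heq => ?_⟩
    obtain ⟨f⟩ := ih.2 (by omega)
    have h4 : cnt (lolli g m) {f u} = m + cval g := by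
      rw [← Set.image_singleton, ← cnt_iso]
      omega
    obtain ⟨a, ha⟩ := tip_unique hg m _ h4
    have e3 := addLeafCongr (f.trans a) u
    have : (f.trans a) u = tip hg m := ha
    rw [this] at e3
    exact ⟨(e.symm.trans e3).trans (stepIso hg)⟩

lemma two_cval (g : ℕ) : 2 * cval g = g * (g + 1) + 2 := by
  have : ∑ k ∈ Finset.range g, (g - k) = ∑ k ∈ Finset.range g, (k + 1) := by
    rw [← Finset.sum_range_reflect]
    refine Finset.sum_congr rfl fun k hk => ?_
    rw [Finset.mem_range] at hk
    omega
  have h2 : ∀ n, 2 * ∑ k ∈ Finset.range n, (k + 1) = n * (n + 1) := by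
    intro n
    induction n with
    | zero => simp
    | succ n ih => rw [Finset.sum_range_succ, mul_add, ih]; ring
  rw [cval, this, mul_add, h2]
  ring

lemma lolli_cnt (hg : 3 ≤ g) (m : ℕ) :
    2 * cnt (lolli g m) ∅ = m * (g + m + g ^ 2 + 3) + 2 * (g ^ 2 + 1) := by
  induction m with
  | zero =>
    obtain ⟨e, _⟩ := zeroIso hg
    rw [← Set.image_empty e, ← cnt_iso, cnt_circ_empty hg]
    ring
  | succ m ih =>
    have h2 : cnt (lolli g (m + 1)) ∅ = cnt (lolli g m) ∅ + (1 + (m + cval g)) := by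
      rw [← lolli_tip hg, ← cnt_empty, cnt_iso (stepIso hg), Set.image_empty]
    have h3 := two_cval g
    rw [h2]
    nlinarith

end

lemma leaf_iso {V : Type} (G : SimpleGraph V) (v u : V) (hu : G.Adj v u)
    (huniq : ∀ w, G.Adj v w → w = u) :
    Nonempty (addLeaf (G.induce {v}ᶜ) ⟨u, hu.ne'⟩ ≃g G) := by
  classical
  refine ⟨{ toEquiv := Equiv.optionSubtypeNe v, map_rel_iff' := ?_ }⟩
  rintro (_ | ⟨x, hx⟩) (_ | ⟨y, hy⟩)
  · simp
  · exact ⟨fun h => Subtype.ext (huniq y h), fun h => by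
      have h : y = u := congrArg Subtype.val h
      show G.Adj v y
      rw [h]; exact hu⟩
  · exact ⟨fun h => Subtype.ext (huniq x (G.adj_symm h)),
      fun h => by
      have h : x = u := congrArg Subtype.val h
      show G.Adj x v
      rw [h]; exact hu.symm⟩
  · rw [addLeaf_ss]
    exact Iff.rfl

lemma uni_of (g : ℕ) (hg : 3 ≤ g) (m : ℕ) : ∀ (V : Type) [Fintype V] (G : SimpleGraph V),
    Fintype.card V = g + m → G.Connected → Nat.card G.edgeSet = g + m →
    ∀ f : ZMod g → V, Function.Injective f → (∀ a, G.Adj (f a) (f (a + 1))) → Uni g m V G := by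
  classical
  have : NeZero g := ⟨by omega⟩
  induction m using Nat.strong_induction_on with
  | _ m ih =>
  intro V _ G hcard hconn hedge f hf hadj
  have hE : G.edgeFinset.card = g + m := by
    rw [← hedge, Nat.card_eq_fintype_card, SimpleGraph.edgeFinset_card]
  have hadj' : ∀ a, G.Adj (f a) (f (a - 1)) := by
    intro a
    have := hadj (a - 1)
    rw [sub_add_cancel] at this
    exact this.symm
  have hne : ∀ a, f (a + 1) ≠ f (a - 1) := by
    intro a h
    have := hf h
    apply two_ne hg
    have h2 : (1 + 1 : ZMod g) = (a + 1) - (a - 1) := by ring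
    rw [h2, this, sub_self]
  by_cases hleaf : ∃ v, G.degree v = 1
  · obtain ⟨v, hv⟩ := hleaf
    obtain ⟨u, hu, huniq⟩ := degree_eq_one_iff_existsUnique_adj.1 hv
    have hfv : ∀ a, f a ≠ v := by
      rintro a rfl
      exact hne a ((huniq _ (hadj a)).trans (huniq _ (hadj' a)).symm)
    have hlt : g < g + m := by
      have h1 : (Finset.univ.image f).card = g := by
        rw [Finset.card_image_of_injective _ hf, Finset.card_univ, ZMod.card]
      have h2 : (Finset.univ.image f).card < (Finset.univ : Finset V).card := by
        apply Finset.card_lt_card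
        rw [Finset.ssubset_univ_iff]
        intro h
        have := Finset.mem_univ v
        rw [← h, Finset.mem_image] at this
        obtain ⟨a, _, ha⟩ := this
        exact hfv a ha
      rw [Finset.card_univ, hcard, h1] at h2
      exact h2
    obtain ⟨k, rfl⟩ : ∃ k, m = k + 1 := ⟨m - 1, by omega⟩
    obtain ⟨e⟩ := leaf_iso G v u hu huniq
    refine Uni.leaf (ih k (by omega) _ (G.induce {v}ᶜ) ?_
      (hconn.induce_compl_singleton_of_degree_eq_one hv) ?_
      (fun a => ⟨f a, hfv a⟩) ?_ ?_) _ e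
    · rw [Fintype.card_compl_set, hcard]
      simp
    · rw [Nat.card_eq_fintype_card, ← SimpleGraph.edgeFinset_card,
        card_edgeFinset_induce_compl_singleton, card_edgeFinset_deleteIncidenceSet, hE, hv]
      omega
    · intro a b h
      exact hf (congrArg Subtype.val h)
    · intro a
      exact hadj a
  · push Not at hleaf
    have hnt : Nontrivial V := ⟨f 0, f (0 + 1), (hadj 0).ne⟩
    have h2 : ∀ v, 2 ≤ G.degree v := by
      intro v
      have h1 := hconn.preconnected.degree_pos_of_nontrivial v
      have := hleaf v
      omega
    have hsum : ∑ v, G.degree v = ∑ v : V, 2 := by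
      rw [G.sum_degrees_eq_twice_card_edges, hE, Finset.sum_const, Finset.card_univ, hcard,
        smul_eq_mul, mul_comm]
    have hdeg : ∀ v, G.degree v = 2 := by
      intro v
      exact ((Finset.sum_eq_sum_iff_of_le (fun v _ => h2 v)).1 hsum.symm v
        (Finset.mem_univ v)).symm
    have hnb : ∀ a w, G.Adj (f a) w → w = f (a + 1) ∨ w = f (a - 1) := by
      intro a w hw
      have hsub : ({f (a + 1), f (a - 1)} : Finset V) ⊆ G.neighborFinset (f a) := by
        intro x hx
        rw [Finset.mem_insert, Finset.mem_singleton] at hx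
        rw [mem_neighborFinset]
        rcases hx with rfl | rfl
        · exact hadj a
        · exact hadj' a
      have heq := Finset.eq_of_subset_of_card_le hsub (by
        rw [card_neighborFinset_eq_degree, hdeg, Finset.card_pair (hne a)])
      have : w ∈ G.neighborFinset (f a) := by rwa [mem_neighborFinset]
      rw [← heq] at this
      simpa using this
    have hsurj : Function.Surjective f := by
      intro y
      have := hconn.preconnected (f 0) y
      rw [reachable_iff_reflTransGen] at this
      induction this with
      | refl => exact ⟨0, rfl⟩
      | tail _ hbc ih =>
        obtain ⟨a, rfl⟩ := ih
        rcases hnb a _ hbc with h | h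
        · exact ⟨_, h.symm⟩
        · exact ⟨_, h.symm⟩
    have hm : m = 0 := by
      have := Fintype.card_of_bijective ⟨hf, hsurj⟩
      rw [ZMod.card, hcard] at this
      omega
    subst hm
    refine Uni.base { toEquiv := Equiv.ofBijective f ⟨hf, hsurj⟩, map_rel_iff' := ?_ }
    intro a b
    rw [circ_adj hg]
    show G.Adj (f a) (f b) ↔ _
    constructor
    · intro h
      rcases hnb a _ h with h | h
      · exact Or.inl (hf h)
      · right
        rw [hf h, sub_add_cancel]
    · rintro (rfl | rfl)
      · exact hadj a
      · exact (hadj b).symm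

lemma main_uni (n g : ℕ) (hg : 3 ≤ g) (hgn : g < n) {V : Type} [Fintype V] (G : SimpleGraph V)
    (hc : Fintype.card V = n) (hconn : G.Connected) (hE : Nat.card G.edgeSet = n)
    (hgirth : G.girth = g) : Uni g (n - g) V G := by
  have hcyc : ¬ G.IsAcyclic := by
    intro h
    rw [h.girth_eq_zero] at hgirth
    omega
  obtain ⟨a, w, hw, hl⟩ := exists_girth_eq_length.2 hcyc
  obtain ⟨φ⟩ := (cycleGraph_isContained_iff (by omega : 2 < g)).2 ⟨a, w, hw, by omega⟩
  obtain ⟨e, -⟩ := zeroIso hg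
  obtain ⟨k, rfl⟩ : ∃ k, g = k + 2 := ⟨g - 2, by omega⟩
  refine uni_of _ hg _ V G (by omega) hconn (by omega) (fun x : ZMod (k + 2) => φ (x : Fin (k + 2)))
    (fun x y h => φ.injective h) ?_
  intro x
  refine φ.toHom.map_adj (cycleGraph_adj.2 (Or.inr ?_))
  exact (sub_eq_iff_eq_add' (G := ZMod (k + 2))).2 rfl

end LolliAux

open LolliAux

/-- For `3 ≤ g < n`, among all unicyclic graphs on `n` vertices with girth `g`, the
lollipop graph `U^l_{n,g}` uniquely minimizes the core index, and
`F(U^l_{n,g}) = ((n-g)/2)(n + g² + 3) + g² + 1`. -/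
theorem lollipop_minimizes_coreIndex (n g : ℕ) (hg : 3 ≤ g) (hgn : g < n) :
    (∀ {V : Type} [Fintype V] (G : SimpleGraph V), Fintype.card V = n →
      G.Connected → Nat.card G.edgeSet = n → G.girth = g →
      (coreIndex (lollipop n g) ≤ coreIndex G ∧
        (coreIndex G = coreIndex (lollipop n g) ↔ Nonempty (G ≃g lollipop n g)))) ∧
    coreIndex (lollipop n g) = (n - g) * (n + g ^ 2 + 3) / 2 + g ^ 2 + 1 := by
  have hL : lollipop n g = lolli g (n - g) := rfl
  refine ⟨?_, ?_⟩
  · intro V _ G hc hconn hE hgirth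
    have hU := main_uni n g hg hgn G hc hconn hE hgirth
    obtain ⟨h1, h2⟩ := hU.min hg
    rw [hL, coreIndex_eq, coreIndex_eq]
    refine ⟨h1, h2, ?_⟩
    rintro ⟨e⟩
    rw [cnt_iso e, Set.image_empty]
  · rw [hL, coreIndex_eq]
    have := lolli_cnt hg (n - g)
    rw [show g + (n - g) = n by omega] at this
    omega
end
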